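/- arXiv:2403.02851 — 3 statements merged into one kernel-verified Lean document; each statement's English description precedes it below -/
import Mathlib

section
/- For every quaternion α ∈ ℍ, the quaternionic Mahler measure of the linear polynomial q ↦ q − α equals |α|²/4 if |α| ≤ 1, and equals 1/(4|α|²) + log|α| if |α| > 1. -/
open MeasureTheory Quaternion

noncomputable instance : MeasurableSpace (Quaternion ℝ) := borel _
instance : BorelSpace (Quaternion ℝ) := ⟨rfl⟩
instance : Nonempty (Metric.sphere (0 : Quaternion ℝ) 1) := ⟨⟨1, by simp⟩⟩

/-- The probability Haar measure `μ` on the group `T¹(ℍ)` of unit quaternions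
(the Haar measure normalized so that the whole group has measure `1`). -/
noncomputable def muH : Measure (Metric.sphere (0 : Quaternion ℝ) 1) :=
  Measure.haarMeasure ⊤

/-- The quaternionic Mahler measure `m_ℍ(f) = ∫_{T¹(ℍ)} log |f(q)| dμ(q)`. -/
noncomputable def mahlerH (f : Quaternion ℝ → Quaternion ℝ) : ℝ :=
  ∫ q : Metric.sphere (0 : Quaternion ℝ) 1, Real.log ‖f q‖ ∂muH

open Polynomial Filter Topology

instance : Measure.IsHaarMeasure muH := by
  unfold muH; infer_instance

instance : IsProbabilityMeasure muH :=
  ⟨Measure.haarMeasure_self⟩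

lemma Continuous.integrable_muH {f : Metric.sphere (0 : ℍ) 1 → ℝ} (hf : Continuous f) :
    Integrable f muH :=
  hf.integrable_of_hasCompactSupport (HasCompactSupport.of_compactSpace f)

lemma continuous_re_sphere :
    Continuous fun q : Metric.sphere (0 : ℍ) 1 => (q : ℍ).re :=
  Quaternion.continuous_re.comp continuous_subtype_val

lemma continuous_imI_sphere :
    Continuous fun q : Metric.sphere (0 : ℍ) 1 => (q : ℍ).imI :=
  Quaternion.continuous_imI.comp continuous_subtype_val

lemma continuous_imJ_sphere :
    Continuous fun q : Metric.sphere (0 : ℍ) 1 => (q : ℍ).imJ :=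
  Quaternion.continuous_imJ.comp continuous_subtype_val

lemma continuous_imK_sphere :
    Continuous fun q : Metric.sphere (0 : ℍ) 1 => (q : ℍ).imK :=
  Quaternion.continuous_imK.comp continuous_subtype_val

lemma sum_sq_sphere (q : Metric.sphere (0 : ℍ) 1) :
    (q : ℍ).re ^ 2 + (q : ℍ).imI ^ 2 + (q : ℍ).imJ ^ 2 + (q : ℍ).imK ^ 2 = 1 := by
  rw [← Quaternion.normSq_def', Quaternion.normSq_eq_norm_mul_self, norm_eq_of_mem_sphere]
  norm_num

lemma abs_re_sphere_le_one (q : Metric.sphere (0 : ℍ) 1) : |(q : ℍ).re| ≤ 1 := by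
  rw [← sq_le_one_iff_abs_le_one]
  nlinarith [sum_sq_sphere q, sq_nonneg (q : ℍ).imI, sq_nonneg (q : ℍ).imJ,
    sq_nonneg (q : ℍ).imK]

/-- The element `exp (t u)` of the one-parameter subgroup of the unit quaternions generated by
the purely imaginary unit quaternion `u = a i + b j + c k`. -/
lemma exists_exp_sphere (a b c : ℝ) (h : a ^ 2 + b ^ 2 + c ^ 2 = 1) (t : ℝ) :
    ∃ e : Metric.sphere (0 : ℍ) 1, (e : ℍ).re = Real.cos t ∧ (e : ℍ).imI = Real.sin t * a ∧
      (e : ℍ).imJ = Real.sin t * b ∧ (e : ℍ).imK = Real.sin t * c := by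
  obtain ⟨u, h0, h1, h2, h3⟩ : ∃ u : ℍ, u.re = Real.cos t ∧ u.imI = Real.sin t * a ∧
      u.imJ = Real.sin t * b ∧ u.imK = Real.sin t * c := ⟨⟨_, _, _, _⟩, rfl, rfl, rfl, rfl⟩
  refine ⟨⟨u, ?_⟩, h0, h1, h2, h3⟩
  rw [mem_sphere_zero_iff_norm, ← pow_eq_one_iff_of_nonneg (norm_nonneg _) two_ne_zero, sq,
    ← Quaternion.normSq_eq_norm_mul_self, Quaternion.normSq_def', h0, h1, h2, h3]
  linear_combination (Real.sin t) ^ 2 * h + Real.sin_sq_add_cos_sq t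

/-- Integration by parts along the one-parameter subgroup generated by `a i + b j + c k`. -/
lemma integral_derivative_re_mul_sq (a b c : ℝ) (h : a ^ 2 + b ^ 2 + c ^ 2 = 1) (g : ℝ[X]) :
    ∫ q, (derivative g).eval (q : ℍ).re *
        (a * (q : ℍ).imI + b * (q : ℍ).imJ + c * (q : ℍ).imK) ^ 2 ∂muH =
      ∫ q, g.eval (q : ℍ).re * (q : ℍ).re ∂muH := by
  let x : Metric.sphere (0 : ℍ) 1 → ℝ := fun q => (q : ℍ).re
  let y : Metric.sphere (0 : ℍ) 1 → ℝ := fun q =>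
    a * (q : ℍ).imI + b * (q : ℍ).imJ + c * (q : ℍ).imK
  have hx : Continuous x := continuous_re_sphere
  have hy : Continuous y :=
    ((continuous_const.mul continuous_imI_sphere).add
      (continuous_const.mul continuous_imJ_sphere)).add
      (continuous_const.mul continuous_imK_sphere)
  let ξ : ℝ → Metric.sphere (0 : ℍ) 1 → ℝ := fun t q => Real.cos t * x q - Real.sin t * y q
  let η : ℝ → Metric.sphere (0 : ℍ) 1 → ℝ := fun t q => Real.cos t * y q + Real.sin t * x q
  let F : ℝ → Metric.sphere (0 : ℍ) 1 → ℝ := fun t q => g.eval (ξ t q) * η t q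
  let F' : ℝ → Metric.sphere (0 : ℍ) 1 → ℝ := fun t q =>
    g.eval (ξ t q) * ξ t q - (derivative g).eval (ξ t q) * η t q ^ 2
  have hF : Continuous fun p : ℝ × Metric.sphere (0 : ℍ) 1 => F p.1 p.2 := by
    simp only [F, ξ, η]; fun_prop
  have hF' : Continuous fun p : ℝ × Metric.sphere (0 : ℍ) 1 => F' p.1 p.2 := by
    simp only [F', ξ, η]; fun_prop
  have hξd (t q) : HasDerivAt (fun s => ξ s q) (-η t q) t := by
    refine (((Real.hasDerivAt_cos t).mul_const (x q)).fun_sub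
      ((Real.hasDerivAt_sin t).mul_const (y q))).congr_deriv ?_
    simp only [η]; ring
  have hηd (t q) : HasDerivAt (fun s => η s q) (ξ t q) t := by
    refine (((Real.hasDerivAt_cos t).mul_const (y q)).fun_add
      ((Real.hasDerivAt_sin t).mul_const (x q))).congr_deriv ?_
    simp only [ξ]; ring
  have hFd (t q) : HasDerivAt (fun s => F s q) (F' t q) t := by
    refine (((g.hasDerivAt (ξ t q)).comp t (hξd t q)).fun_mul (hηd t q)).congr_deriv ?_
    simp only [F', Function.comp]; ring
  obtain ⟨C, hC⟩ := (isCompact_Icc (a := (-1 : ℝ)) (b := 1)).prod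
    (isCompact_univ (X := Metric.sphere (0 : ℍ) 1)) |>.exists_bound_of_continuousOn
      hF'.continuousOn
  have key := (hasDerivAt_integral_of_dominated_loc_of_deriv_le (μ := muH) (F := F) (F' := F')
    (x₀ := 0) (s := Set.Icc (-1) 1) (bound := fun _ => C)
    (Icc_mem_nhds (by norm_num) (by norm_num))
    (Eventually.of_forall fun t =>
      (hF.comp (Continuous.prodMk_right t)).aestronglyMeasurable)
    (hF.comp (Continuous.prodMk_right 0)).integrable_muH
    (hF'.comp (Continuous.prodMk_right 0)).aestronglyMeasurable
    (Eventually.of_forall fun q t ht => hC (t, q) ⟨ht, trivial⟩)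
    (integrable_const C) (Eventually.of_forall fun q t _ => hFd t q)).2
  have hconst (t : ℝ) : ∫ q, F t q ∂muH = ∫ q, F 0 q ∂muH := by
    obtain ⟨e, he, heI, heJ, heK⟩ := exists_exp_sphere a b c h t
    rw [← integral_mul_left_eq_self (F 0) e]
    refine integral_congr_ae (Eventually.of_forall fun q => ?_)
    have h1 : x (e * q) = ξ t q := by
      simp only [x, ξ, y, Metric.unitSphere.coe_mul, Quaternion.re_mul, he, heI, heJ, heK]
      ring
    have h2 : y (e * q) = η t q := by
      simp only [x, η, y, Metric.unitSphere.coe_mul, Quaternion.imI_mul,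
        Quaternion.imJ_mul, Quaternion.imK_mul, he, heI, heJ, heK]
      linear_combination (Real.sin t * (q : ℍ).re) * h
    simp only [F]
    rw [← h1, ← h2]
    simp [ξ, η]
  have h0 : ∫ q, F' 0 q ∂muH = 0 := by
    refine key.unique ?_
    simp only [hconst]
    exact hasDerivAt_const _ _
  have hgx : Continuous fun q => g.eval (x q) * x q := by fun_prop
  have hgy : Continuous fun q => (derivative g).eval (x q) * y q ^ 2 := by fun_prop
  simp only [F', ξ, η, Real.cos_zero, Real.sin_zero, one_mul, zero_mul, add_zero, sub_zero] at h0
  rw [integral_sub hgx.integrable_muH hgy.integrable_muH] at h0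
  exact (sub_eq_zero.1 h0).symm

lemma integral_gegenbauer_eq_zero (g : ℝ[X]) :
    ∫ q, ((1 - X ^ 2) * derivative g - 3 * X * g).eval (q : ℍ).re ∂muH = 0 := by
  have hi := integral_derivative_re_mul_sq 1 0 0 (by norm_num) g
  have hj := integral_derivative_re_mul_sq 0 1 0 (by norm_num) g
  have hk := integral_derivative_re_mul_sq 0 0 1 (by norm_num) g
  simp only [one_mul, zero_mul, add_zero, zero_add] at hi hj hk
  have hx := continuous_re_sphere
  have hI := continuous_imI_sphere
  have hJ := continuous_imJ_sphere
  have hK := continuous_imK_sphere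
  have hgI : Continuous fun q : Metric.sphere (0 : ℍ) 1 =>
      (derivative g).eval (q : ℍ).re * (q : ℍ).imI ^ 2 := by fun_prop
  have hgJ : Continuous fun q : Metric.sphere (0 : ℍ) 1 =>
      (derivative g).eval (q : ℍ).re * (q : ℍ).imJ ^ 2 := by fun_prop
  have hgK : Continuous fun q : Metric.sphere (0 : ℍ) 1 =>
      (derivative g).eval (q : ℍ).re * (q : ℍ).imK ^ 2 := by fun_prop
  have hg : Continuous fun q : Metric.sphere (0 : ℍ) 1 =>
      3 * (g.eval (q : ℍ).re * (q : ℍ).re) := by fun_prop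
  have hsum : ∀ q : Metric.sphere (0 : ℍ) 1,
      ((1 - X ^ 2) * derivative g - 3 * X * g).eval (q : ℍ).re =
      (derivative g).eval (q : ℍ).re * (q : ℍ).imI ^ 2 +
      (derivative g).eval (q : ℍ).re * (q : ℍ).imJ ^ 2 +
      (derivative g).eval (q : ℍ).re * (q : ℍ).imK ^ 2 -
      3 * (g.eval (q : ℍ).re * (q : ℍ).re) := by
    intro q
    simp only [eval_sub, eval_mul, eval_one, eval_pow, eval_X, eval_ofNat]
    linear_combination -(derivative g).eval (q : ℍ).re * sum_sq_sphere q
  simp_rw [hsum]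
  rw [integral_sub ((hgI.integrable_muH.fun_add hgJ.integrable_muH).fun_add hgK.integrable_muH)
      hg.integrable_muH,
    integral_add (hgI.integrable_muH.fun_add hgJ.integrable_muH) hgK.integrable_muH,
    integral_add hgI.integrable_muH hgJ.integrable_muH, hi, hj, hk, integral_const_mul]
  ring

lemma integral_chebyshev_U (n : ℤ) (h0 : n ≠ 0) (h2 : n ≠ -2) :
    ∫ q, (Chebyshev.U ℝ n).eval (q : ℍ).re ∂muH = 0 := by
  have h := integral_gegenbauer_eq_zero (derivative (Chebyshev.U ℝ n))
  have hode := Chebyshev.one_sub_X_sq_mul_derivative_derivative_U_eq_poly_in_U (R := ℝ) n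
  simp only [Function.iterate_succ, Function.iterate_zero, Function.comp_apply, id_eq] at hode
  have hode' : (1 - X ^ 2) * derivative (derivative (Chebyshev.U ℝ n)) -
      3 * X * derivative (Chebyshev.U ℝ n) =
      C (-(((n : ℝ) + 2) * n)) * Chebyshev.U ℝ n := by
    rw [hode]
    simp only [C_neg, C_mul, C_add, map_intCast, map_ofNat]
    ring
  rw [hode'] at h
  simp only [eval_mul, eval_C] at h
  rw [integral_const_mul] at h
  refine (mul_eq_zero.1 h).resolve_left ?_
  have h0' : (n : ℝ) ≠ 0 := by exact_mod_cast h0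
  have h2' : (n : ℝ) + 2 ≠ 0 := by
    have : n + 2 ≠ 0 := by omega
    exact_mod_cast this
  exact neg_ne_zero.2 (mul_ne_zero h2' h0')

lemma integral_chebyshev_T (n : ℕ) (h0 : n ≠ 0) :
    ∫ q, (Chebyshev.T ℝ n).eval (q : ℍ).re ∂muH = if n = 2 then -1 / 2 else 0 := by
  have hU (k : ℤ) : Integrable
      (fun q : Metric.sphere (0 : ℍ) 1 => (Chebyshev.U ℝ k).eval (q : ℍ).re) muH :=
    ((Chebyshev.U ℝ k).continuous.comp continuous_re_sphere).integrable_muH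
  have hT : ∀ x : ℝ, (Chebyshev.T ℝ n).eval x =
      2⁻¹ * ((Chebyshev.U ℝ n).eval x - (Chebyshev.U ℝ (n - 2)).eval x) := by
    intro x
    have := congr_arg (eval x) (Chebyshev.two_mul_T_eq_U_sub_U ℝ ((n : ℤ) - 2))
    simp only [sub_add_cancel, eval_mul, eval_ofNat, eval_sub] at this
    linarith
  simp_rw [hT]
  rw [integral_const_mul, integral_sub (hU _) (hU _),
    integral_chebyshev_U n (by omega) (by omega)]
  split_ifs with h
  · subst h
    norm_num
  · rw [integral_chebyshev_U _ (by omega) (by omega)]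
    norm_num

lemma hasSum_chebyshev_T_log {r x : ℝ} (hr0 : 0 ≤ r) (hr : r < 1) (hx : |x| ≤ 1) :
    HasSum (fun n : ℕ => r ^ n / n * (Chebyshev.T ℝ n).eval x)
      (-(Real.log (1 - 2 * r * x + r ^ 2) / 2)) := by
  obtain ⟨hx1, hx2⟩ := abs_le.1 hx
  obtain ⟨θ, rfl⟩ : ∃ θ, x = Real.cos θ := ⟨_, (Real.cos_arccos hx1 hx2).symm⟩
  have hz : ‖(r : ℂ) * Complex.exp (θ * Complex.I)‖ < 1 := by
    rw [norm_mul, Complex.norm_exp_ofReal_mul_I]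
    simpa [abs_of_nonneg hr0] using hr
  have h := Complex.hasSum_re (Complex.hasSum_taylorSeries_neg_log hz)
  convert h using 1
  · ext n
    rw [Chebyshev.T_real_cos, mul_pow, ← Complex.exp_nat_mul,
      show (n : ℂ) * (θ * Complex.I) = ((n * θ : ℝ) : ℂ) * Complex.I by push_cast; ring,
      show (r : ℂ) ^ n * Complex.exp (((n * θ : ℝ) : ℂ) * Complex.I) / n =
        ((r ^ n / n : ℝ) : ℂ) * Complex.exp (((n * θ : ℝ) : ℂ) * Complex.I) by
          push_cast; ring, Complex.re_ofReal_mul, Complex.exp_ofReal_mul_I_re]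
    simp
  · rw [Complex.neg_re, Complex.log_re, Complex.norm_def, Real.log_sqrt (Complex.normSq_nonneg _)]
    congr 3
    rw [Complex.normSq_apply]
    simp only [Complex.sub_re, Complex.one_re, Complex.sub_im, Complex.one_im,
      Complex.re_ofReal_mul, Complex.im_ofReal_mul, Complex.exp_ofReal_mul_I_re,
      Complex.exp_ofReal_mul_I_im]
    linear_combination -r ^ 2 * Real.sin_sq_add_cos_sq θ

lemma abs_eval_chebyshev_T_le_one (n : ℕ) {x : ℝ} (hx : |x| ≤ 1) :
    |(Chebyshev.T ℝ n).eval x| ≤ 1 := by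
  obtain ⟨hx1, hx2⟩ := abs_le.1 hx
  rw [← Real.cos_arccos hx1 hx2, Chebyshev.T_real_cos]
  exact Real.abs_cos_le_one _

lemma integral_log_of_lt_one {r : ℝ} (hr0 : 0 ≤ r) (hr : r < 1) :
    ∫ q, Real.log (1 - 2 * r * (q : ℍ).re + r ^ 2) ∂muH = r ^ 2 / 2 := by
  let F : ℕ → Metric.sphere (0 : ℍ) 1 → ℝ := fun n q =>
    r ^ n / n * (Chebyshev.T ℝ n).eval (q : ℍ).re
  have hF (n : ℕ) : Integrable (F n) muH :=
    (continuous_const.mul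
      ((Chebyshev.T ℝ n).continuous.comp continuous_re_sphere)).integrable_muH
  have hbound (n : ℕ) (q) : ‖F n q‖ ≤ r ^ n := by
    rw [norm_mul, Real.norm_of_nonneg (by positivity), Real.norm_eq_abs]
    refine (mul_le_of_le_one_right (by positivity)
      (abs_eval_chebyshev_T_le_one n (abs_re_sphere_le_one q))).trans ?_
    rcases n.eq_zero_or_pos with rfl | hn
    · simp
    · exact div_le_self (by positivity) (by exact_mod_cast hn)
  have hsummable : Summable fun n => ∫ q, ‖F n q‖ ∂muH := by
    refine Summable.of_nonneg_of_le (fun n => integral_nonneg fun q => norm_nonneg _)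
      (fun n => ?_) (summable_geometric_of_lt_one hr0 hr)
    refine (integral_mono (hF n).norm (integrable_const (r ^ n)) (hbound n)).trans ?_
    simp
  have h := hasSum_integral_of_summable_integral_norm hF hsummable
  have hs (n : ℕ) : ∫ q, F n q ∂muH = if n = 2 then -r ^ 2 / 4 else 0 := by
    simp only [F]
    rw [integral_const_mul]
    rcases eq_or_ne n 0 with rfl | hn
    · simp
    · rw [integral_chebyshev_T n hn]
      split_ifs with h2
      · subst h2
        push_cast
        ring
      · simp
  simp_rw [hs] at h
  have h' := h.unique (hasSum_ite_eq 2 (-r ^ 2 / 4))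
  have ht (q : Metric.sphere (0 : ℍ) 1) : ∑' n, F n q =
      (-(1 / 2)) * Real.log (1 - 2 * r * (q : ℍ).re + r ^ 2) := by
    rw [(hasSum_chebyshev_T_log hr0 hr (abs_re_sphere_le_one q)).tsum_eq]
    ring
  simp_rw [ht] at h'
  rw [integral_const_mul] at h'
  linarith

lemma muH_singleton (q : Metric.sphere (0 : ℍ) 1) : muH {q} = 0 := by
  have hrank : 1 < Module.rank ℝ ℍ := by
    rw [Quaternion.rank_eq_four]
    norm_num
  have : ConnectedSpace (Metric.sphere (0 : ℍ) 1) :=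
    Subtype.connectedSpace (isConnected_sphere hrank 0 zero_le_one)
  have : Nontrivial (Metric.sphere (0 : ℍ) 1) := by
    refine ⟨⟨1, -1, fun h => ?_⟩⟩
    have := congr_arg (fun q : Metric.sphere (0 : ℍ) 1 => (q : ℍ).re) h
    norm_num at this
  exact measure_singleton q

lemma ae_re_lt_one : ∀ᵐ q : Metric.sphere (0 : ℍ) 1 ∂muH, (q : ℍ).re < 1 := by
  refine measure_mono_null (fun q hq => ?_) (muH_singleton 1)
  have hre : (q : ℍ).re = 1 :=
    le_antisymm (abs_le.1 (abs_re_sphere_le_one q)).2 (not_lt.1 hq)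
  have hs := sum_sq_sphere q
  rw [hre] at hs
  have hI : (q : ℍ).imI = 0 := by nlinarith [sq_nonneg (q : ℍ).imJ, sq_nonneg (q : ℍ).imK]
  have hJ : (q : ℍ).imJ = 0 := by nlinarith [sq_nonneg (q : ℍ).imI, sq_nonneg (q : ℍ).imK]
  have hK : (q : ℍ).imK = 0 := by nlinarith [sq_nonneg (q : ℍ).imI, sq_nonneg (q : ℍ).imJ]
  refine Subtype.ext ?_
  ext <;> simp [hre, hI, hJ, hK]

lemma one_sub_two_mul_add_sq_pos {r x : ℝ} (hr0 : 0 ≤ r) (hr : r < 1) (hx : x ≤ 1) :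
    0 < 1 - 2 * r * x + r ^ 2 := by
  nlinarith [mul_le_mul_of_nonneg_left hx hr0, pow_pos (sub_pos.2 hr) 2]

lemma integral_log_one :
    ∫ q, Real.log (1 - 2 * 1 * (q : ℍ).re + 1 ^ 2) ∂muH = 1 / 2 := by
  let r : ℕ → ℝ := fun n => 1 - 1 / ((n : ℝ) + 2)
  have hr_half (n : ℕ) : 1 / 2 ≤ r n := by
    have : 1 / ((n : ℝ) + 2) ≤ 1 / 2 :=
      one_div_le_one_div_of_le two_pos (by linarith [n.cast_nonneg (α := ℝ)])
    simp only [r]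
    linarith
  have hr_pos (n : ℕ) : 0 < r n := by linarith [hr_half n]
  have hr_lt (n : ℕ) : r n < 1 := by
    have : 0 < 1 / ((n : ℝ) + 2) := by positivity
    simp only [r]
    linarith
  have hr_mono : Monotone r := fun m n hmn => by
    have : (m : ℝ) ≤ n := by exact_mod_cast hmn
    simp only [r]
    gcongr
  have hr_lim : Tendsto r atTop (𝓝 1) := by
    have h : Tendsto (fun n : ℕ => 1 / ((n : ℝ) + 2)) atTop (𝓝 0) :=
      (tendsto_const_nhds (x := (1 : ℝ))).div_atTop
        (tendsto_atTop_add_const_right _ 2 tendsto_natCast_atTop_atTop)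
    simpa only [sub_zero] using h.const_sub 1
  let f : ℕ → Metric.sphere (0 : ℍ) 1 → ℝ := fun n q =>
    7 - (Real.log (1 - 2 * r n * (q : ℍ).re + r n ^ 2) - Real.log (r n))
  let g : Metric.sphere (0 : ℍ) 1 → ℝ := fun q =>
    7 - Real.log (1 - 2 * 1 * (q : ℍ).re + 1 ^ 2)
  have hre (q : Metric.sphere (0 : ℍ) 1) := abs_le.1 (abs_re_sphere_le_one q)
  have hpos (n : ℕ) (q : Metric.sphere (0 : ℍ) 1) : 0 < 1 - 2 * r n * (q : ℍ).re + r n ^ 2 :=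
    one_sub_two_mul_add_sq_pos (hr_pos n).le (hr_lt n) (hre q).2
  have hlog_cont (n : ℕ) : Continuous fun q : Metric.sphere (0 : ℍ) 1 =>
      Real.log (1 - 2 * r n * (q : ℍ).re + r n ^ 2) := by
    refine Continuous.log ?_ fun q => (hpos n q).ne'
    have := continuous_re_sphere
    fun_prop
  have hf_cont (n : ℕ) : Continuous (f n) :=
    continuous_const.sub ((hlog_cont n).sub continuous_const)
  have hf_eq (n : ℕ) (q) :
      f n q = 7 - Real.log ((1 - 2 * r n * (q : ℍ).re + r n ^ 2) / r n) := by
    simp only [f]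
    rw [Real.log_div (hpos n q).ne' (hr_pos n).ne']
  have hf_mono (q) : Monotone fun n => f n q := fun m n hmn => by
    simp only [hf_eq]
    refine sub_le_sub_left (Real.log_le_log (div_pos (hpos n q) (hr_pos n)) ?_) _
    rw [div_le_div_iff₀ (hr_pos n) (hr_pos m)]
    nlinarith [mul_nonneg (sub_nonneg.2 (hr_mono hmn))
      (sub_nonneg.2 (mul_le_one₀ (hr_lt m).le (hr_pos n).le (hr_lt n).le))]
  have hf_nonneg (n : ℕ) (q) : 0 ≤ f n q := by
    rw [hf_eq]
    have h1 := Real.log_le_sub_one_of_pos (div_pos (hpos n q) (hr_pos n))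
    have h2 : (1 - 2 * r n * (q : ℍ).re + r n ^ 2) / r n ≤ 8 := by
      rw [div_le_iff₀ (hr_pos n)]
      nlinarith [(hre q).1, hr_pos n, hr_half n, hr_lt n]
    linarith
  have hf_int (n : ℕ) : ∫ q, f n q ∂muH = 7 - (r n ^ 2 / 2 - Real.log (r n)) := by
    simp only [f]
    rw [integral_sub (integrable_const _)
        ((hlog_cont n).integrable_muH.sub' (integrable_const _)),
      integral_sub (hlog_cont n).integrable_muH (integrable_const _),
      integral_log_of_lt_one (hr_pos n).le (hr_lt n)]
    simp
  have hfg : ∀ᵐ q ∂muH, Tendsto (fun n => f n q) atTop (𝓝 (g q)) := by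
    filter_upwards [ae_re_lt_one] with q hq
    have h1 : Tendsto (fun n => 1 - 2 * r n * (q : ℍ).re + r n ^ 2) atTop
        (𝓝 (1 - 2 * 1 * (q : ℍ).re + 1 ^ 2)) :=
      (tendsto_const_nhds.sub ((hr_lim.const_mul 2).mul_const _)).add (hr_lim.pow 2)
    have h2 := (h1.log (by linarith)).sub (hr_lim.log one_ne_zero)
    simpa only [Real.log_one, sub_zero] using h2.const_sub 7
  have hg_nonneg : 0 ≤ᵐ[muH] g := by
    filter_upwards [hfg] with q hq
    exact ge_of_tendsto' hq fun n => hf_nonneg n q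
  have hg_meas : AEStronglyMeasurable g muH :=
    aestronglyMeasurable_of_tendsto_ae atTop
      (fun n => (hf_cont n).aestronglyMeasurable) hfg
  have hmct := lintegral_tendsto_of_tendsto_of_monotone (μ := muH)
    (f := fun n q => ENNReal.ofReal (f n q)) (F := fun q => ENNReal.ofReal (g q))
    (fun n => (hf_cont n).measurable.ennreal_ofReal.aemeasurable)
    (Eventually.of_forall fun q m n hmn => ENNReal.ofReal_le_ofReal (hf_mono q hmn))
    (hfg.mono fun q hq => ENNReal.tendsto_ofReal hq)
  have hlim : Tendsto (fun n => ∫⁻ q, ENNReal.ofReal (f n q) ∂muH) atTop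
      (𝓝 (ENNReal.ofReal (7 - (1 ^ 2 / 2 - Real.log 1)))) := by
    have h : Tendsto (fun n => 7 - (r n ^ 2 / 2 - Real.log (r n))) atTop
        (𝓝 (7 - (1 ^ 2 / 2 - Real.log 1))) :=
      (((hr_lim.pow 2).div_const 2).sub (hr_lim.log one_ne_zero)).const_sub 7
    refine (ENNReal.tendsto_ofReal h).congr fun n => ?_
    rw [← hf_int, ofReal_integral_eq_lintegral_ofReal (hf_cont n).integrable_muH
      (Eventually.of_forall (hf_nonneg n))]
  have hg_int : ∫ q, g q ∂muH = 13 / 2 := by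
    rw [integral_eq_lintegral_of_nonneg_ae hg_nonneg hg_meas, tendsto_nhds_unique hmct hlim,
      ENNReal.toReal_ofReal] <;> norm_num
  have hg : Integrable g muH := by
    by_contra h
    rw [integral_undef h] at hg_int
    norm_num at hg_int
  have hcongr (q : Metric.sphere (0 : ℍ) 1) :
      Real.log (1 - 2 * 1 * (q : ℍ).re + 1 ^ 2) = 7 - g q := by
    simp only [g, sub_sub_cancel]
  simp_rw [hcongr]
  rw [integral_sub (integrable_const _) hg, hg_int]
  norm_num

lemma norm_sub_coe_sq (q : Metric.sphere (0 : ℍ) 1) (r : ℝ) :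
    ‖(q : ℍ) - (r : ℍ)‖ ^ 2 = 1 - 2 * r * (q : ℍ).re + r ^ 2 := by
  rw [sq, ← Quaternion.normSq_eq_norm_mul_self, Quaternion.normSq_def']
  simp only [Quaternion.re_sub, Quaternion.imI_sub, Quaternion.imJ_sub, Quaternion.imK_sub,
    Quaternion.re_coe, Quaternion.imI_coe, Quaternion.imJ_coe, Quaternion.imK_coe]
  linear_combination sum_sq_sphere q

lemma exists_sphere_mul_norm (α : ℍ) :
    ∃ u : Metric.sphere (0 : ℍ) 1, α = (u : ℍ) * ((‖α‖ : ℝ) : ℍ) := by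
  rcases eq_or_ne α 0 with rfl | hα
  · exact ⟨1, by simp⟩
  · have hn : ‖α‖ ≠ 0 := norm_ne_zero_iff.2 hα
    refine ⟨⟨α * ((‖α‖⁻¹ : ℝ) : ℍ), by simp [hn]⟩, ?_⟩
    rw [mul_assoc, ← Quaternion.coe_mul, inv_mul_cancel₀ hn, Quaternion.coe_one, mul_one]

lemma mahlerH_sub_const_eq (α : ℍ) :
    mahlerH (fun q => q - α) =
      1 / 2 * ∫ q, Real.log (1 - 2 * ‖α‖ * (q : ℍ).re + ‖α‖ ^ 2) ∂muH := by
  obtain ⟨u, hu⟩ := exists_sphere_mul_norm α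
  rw [mahlerH, ← integral_mul_left_eq_self _ u, ← integral_const_mul]
  refine integral_congr_ae (Eventually.of_forall fun q => ?_)
  have h : ‖((u * q : Metric.sphere (0 : ℍ) 1) : ℍ) - α‖ = ‖(q : ℍ) - ((‖α‖ : ℝ) : ℍ)‖ := by
    conv_lhs => rw [hu]
    rw [Metric.unitSphere.coe_mul, ← mul_sub, norm_mul, norm_eq_of_mem_sphere, one_mul]
  simp only
  rw [h, ← norm_sub_coe_sq, Real.log_pow]
  push_cast
  ring

/-- Jensen formula for `m_ℍ(x - α)`. -/
theorem mahlerH_sub_const (α : Quaternion ℝ) :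
    (‖α‖ ≤ 1 → mahlerH (fun q => q - α) = ‖α‖ ^ 2 / 4) ∧
    (1 < ‖α‖ → mahlerH (fun q => q - α) = 1 / (4 * ‖α‖ ^ 2) + Real.log ‖α‖) := by
  rw [mahlerH_sub_const_eq]
  refine ⟨fun h => ?_, fun h => ?_⟩
  · rcases h.eq_or_lt with h | h
    · rw [h, integral_log_one]
      norm_num
    · rw [integral_log_of_lt_one (norm_nonneg α) h]
      ring
  · have hpos : 0 < ‖α‖ := one_pos.trans h
    have hinv : ‖α‖⁻¹ < 1 := inv_lt_one_of_one_lt₀ h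
    have hlog (q : Metric.sphere (0 : ℍ) 1) :
        Real.log (1 - 2 * ‖α‖ * (q : ℍ).re + ‖α‖ ^ 2) =
          Real.log (1 - 2 * ‖α‖⁻¹ * (q : ℍ).re + ‖α‖⁻¹ ^ 2) + 2 * Real.log ‖α‖ := by
      have hq : 0 < 1 - 2 * ‖α‖⁻¹ * (q : ℍ).re + ‖α‖⁻¹ ^ 2 :=
        one_sub_two_mul_add_sq_pos (by positivity) hinv (abs_le.1 (abs_re_sphere_le_one q)).2
      have h2 : 2 * Real.log ‖α‖ = Real.log (‖α‖ ^ 2) := by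
        rw [Real.log_pow]
        norm_num
      rw [h2, ← Real.log_mul hq.ne' (by positivity)]
      congr 1
      field_simp
      ring
    have hcont : Continuous fun q : Metric.sphere (0 : ℍ) 1 =>
        Real.log (1 - 2 * ‖α‖⁻¹ * (q : ℍ).re + ‖α‖⁻¹ ^ 2) := by
      refine Continuous.log ?_ fun q => (one_sub_two_mul_add_sq_pos (by positivity) hinv
        (abs_le.1 (abs_re_sphere_le_one q)).2).ne'
      have := continuous_re_sphere
      fun_prop
    simp_rw [hlog]
    rw [integral_add hcont.integrable_muH (integrable_const _),
      integral_log_of_lt_one (by positivity) hinv]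
    simp only [integral_const, probReal_univ, one_smul]
    field_simp
    ring
end

section
/- Let P(q) = Σ_{k=0}^n qᵏ aₖ (with aₖ ∈ ℍ, not all zero) be a nonzero slice regular quaternionic polynomial. Then the function q ↦ log|P(q)| is integrable on T¹(ℍ) with respect to the probability Haar measure μ; in particular the quaternionic Mahler measure m_ℍ(P) exists and is finite. -/
open MeasureTheory Quaternion

open Polynomial

/-- The function `-log x` with value `∞` at `0`, truncated below at `0`. -/
noncomputable def negLog (x : ℝ) : ENNReal :=
  if x = 0 then ⊤ else ENNReal.ofReal (-Real.log x)

theorem measurable_negLog : Measurable negLog :=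
  Measurable.ite (measurableSet_singleton (0 : ℝ)) measurable_const (by fun_prop)

theorem negLog_anti {x y : ℝ} (hx : 0 ≤ x) (hxy : x ≤ y) : negLog y ≤ negLog x := by
  rcases hx.eq_or_lt with rfl | hx
  · simp [negLog]
  · rw [negLog, negLog, if_neg hx.ne', if_neg (hx.trans_le hxy).ne']
    exact ENNReal.ofReal_le_ofReal (neg_le_neg (Real.log_le_log hx hxy))

theorem negLog_mul_le (x y : ℝ) : negLog (x * y) ≤ negLog x + negLog y := by
  by_cases hx : x = 0
  · simp [negLog, hx]
  by_cases hy : y = 0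
  · simp [negLog, hy]
  simp only [negLog, hx, hy, mul_eq_zero, or_self, if_false]
  rw [Real.log_mul hx hy, neg_add]
  exact ENNReal.ofReal_add_le

theorem negLog_pow_le (x : ℝ) (n : ℕ) : negLog (x ^ n) ≤ n * negLog x := by
  induction n with
  | zero => simp [negLog]
  | succ n ih =>
    rw [pow_succ]
    refine (negLog_mul_le _ _).trans ?_
    push_cast
    rw [add_mul, one_mul]
    gcongr

theorem negLog_lt_top {x : ℝ} (hx : x ≠ 0) : negLog x < ⊤ := by
  simp [negLog, hx]

theorem enorm_log_le {x S : ℝ} (hx : 0 ≤ x) (hxS : x ≤ S) (hS : 1 ≤ S) :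
    ‖Real.log x‖ₑ ≤ ENNReal.ofReal (Real.log S) + negLog x := by
  rcases hx.eq_or_lt with rfl | hx
  · simp [negLog]
  rw [negLog, if_neg hx.ne', Real.enorm_eq_ofReal_abs]
  have h1 := Real.log_le_log hx hxS
  have h2 := Real.log_nonneg hS
  rcases abs_cases (Real.log x) with ⟨h, -⟩ | ⟨h, -⟩ <;> rw [h]
  · exact (ENNReal.ofReal_le_ofReal h1).trans le_self_add
  · exact le_add_self

/-- A quantitative form of Jensen's inequality on the unit circle. -/
theorem lintegral_negLog_norm_eval_le (p : ℂ[X]) (d : ℕ) (hd : p.natDegree ≤ d) {S : ℝ}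
    (hS : 1 ≤ S) (hp : ∀ t : ℂ, ‖t‖ = 1 → ‖p.eval t‖ ≤ S) :
    ∫⁻ θ in Set.Ioc 0 (2 * Real.pi), negLog ‖p.eval (circleMap 0 1 θ)‖ ≤
      ENNReal.ofReal (2 * Real.pi) * (ENNReal.ofReal (Real.log S) + negLog ‖p.coeff d‖) := by
  have hpi : 0 < 2 * Real.pi := by positivity
  by_cases hc : p.coeff d = 0
  · simp [hc, negLog, ENNReal.mul_top, Real.pi_pos]
  have hpd : p.natDegree = d := le_antisymm hd (le_natDegree_of_ne_zero hc)
  have hlead : p.leadingCoeff = p.coeff d := by rw [leadingCoeff, hpd]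
  have hp0 : p ≠ 0 := by rintro rfl; simp at hc
  have hnorm (θ : ℝ) : ‖p.eval (circleMap 0 1 θ)‖ ≤ S := hp _ (by simp)
  have hne : ∀ᵐ θ ∂(volume.restrict (Set.Ioc 0 (2 * Real.pi))),
      p.eval (circleMap 0 1 θ) ≠ 0 := by
    have hcount : {θ : ℝ | p.IsRoot (circleMap 0 1 θ)}.Countable :=
      (finite_setOfPred_isRoot hp0).countable.preimage_circleMap 0 one_ne_zero
    exact ae_restrict_of_ae (compl_mem_ae_iff.2 (hcount.measure_zero _))
  have hint : IntegrableOn (fun θ => Real.log ‖p.eval (circleMap 0 1 θ)‖)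
      (Set.Ioc 0 (2 * Real.pi)) :=
    (intervalIntegrable_iff_integrableOn_Ioc_of_le hpi.le).1 p.intervalIntegrable_mahlerMeasure
  have hJ : 2 * Real.pi * Real.log ‖p.coeff d‖ ≤
      ∫ θ in Set.Ioc 0 (2 * Real.pi), Real.log ‖p.eval (circleMap 0 1 θ)‖ := by
    have h := Real.log_le_log (norm_pos_iff.2 (hlead ▸ hc)) p.leadingCoeff_le_mahlerMeasure
    rw [← logMahlerMeasure_eq_log_MahlerMeasure, logMahlerMeasure_def, Real.circleAverage_def,
      intervalIntegral.integral_of_le hpi.le, smul_eq_mul, hlead, inv_mul_eq_div,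
      le_div_iff₀' hpi] at h
    exact h
  calc ∫⁻ θ in Set.Ioc 0 (2 * Real.pi), negLog ‖p.eval (circleMap 0 1 θ)‖
      ≤ ∫⁻ θ in Set.Ioc 0 (2 * Real.pi),
          ENNReal.ofReal (Real.log S - Real.log ‖p.eval (circleMap 0 1 θ)‖) := by
        refine lintegral_mono_ae ?_
        filter_upwards [hne] with θ hθ
        rw [negLog, if_neg (norm_ne_zero_iff.2 hθ)]
        exact ENNReal.ofReal_le_ofReal (by linarith [Real.log_nonneg hS])
    _ = ENNReal.ofReal (∫ θ in Set.Ioc 0 (2 * Real.pi),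
          (Real.log S - Real.log ‖p.eval (circleMap 0 1 θ)‖)) := by
        refine (ofReal_integral_eq_lintegral_ofReal ((integrable_const _).sub hint) ?_).symm
        filter_upwards [hne] with θ hθ
        exact sub_nonneg.2 (Real.log_le_log (norm_pos_iff.2 hθ) (hnorm θ))
    _ ≤ ENNReal.ofReal (2 * Real.pi * (Real.log S + -Real.log ‖p.coeff d‖)) := by
        refine ENNReal.ofReal_le_ofReal ?_
        rw [integral_sub (integrable_const _) hint]
        simp only [integral_const, MeasurableSet.univ, measureReal_restrict_apply, Set.univ_inter,
          Real.volume_real_Ioc, sub_zero, max_eq_left hpi.le, smul_eq_mul]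
        linarith
    _ ≤ _ := by
        rw [ENNReal.ofReal_mul hpi.le, negLog, if_neg (norm_ne_zero_iff.2 hc)]
        gcongr
        exact ENNReal.ofReal_add_le

namespace Quaternion

/-- The first component `z` of `q = z + w j`. -/
def fstComplex (q : ℍ[ℝ]) : ℂ := ⟨q.re, q.imI⟩

/-- The second component `w` of `q = z + w j`. -/
def sndComplex (q : ℍ[ℝ]) : ℂ := ⟨q.imJ, q.imK⟩

theorem fstComplex_mul (p q : ℍ[ℝ]) : fstComplex (p * q) =
    fstComplex p * fstComplex q - sndComplex p * star (sndComplex q) := by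
  apply Complex.ext <;> simp [fstComplex, sndComplex] <;> ring

theorem sndComplex_mul (p q : ℍ[ℝ]) : sndComplex (p * q) =
    fstComplex p * sndComplex q + sndComplex p * star (fstComplex q) := by
  apply Complex.ext <;> simp [fstComplex, sndComplex] <;> ring

theorem fstComplex_sum {ι : Type*} (s : Finset ι) (f : ι → ℍ[ℝ]) :
    fstComplex (∑ i ∈ s, f i) = ∑ i ∈ s, fstComplex (f i) :=
  map_sum (⟨⟨fstComplex, rfl⟩, fun _ _ => rfl⟩ : ℍ[ℝ] →+ ℂ) f s

theorem norm_fstComplex_sq_add (q : ℍ[ℝ]) :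
    ‖fstComplex q‖ ^ 2 + ‖sndComplex q‖ ^ 2 = ‖q‖ ^ 2 := by
  rw [Complex.sq_norm, Complex.sq_norm, Complex.normSq_apply, Complex.normSq_apply, sq ‖q‖,
    ← Quaternion.normSq_eq_norm_mul_self, Quaternion.normSq_def']
  simp only [fstComplex, sndComplex]
  ring

theorem norm_fstComplex_le (q : ℍ[ℝ]) : ‖fstComplex q‖ ≤ ‖q‖ :=
  le_of_sq_le_sq (by nlinarith [norm_fstComplex_sq_add q, sq_nonneg ‖sndComplex q‖])
    (norm_nonneg _)

theorem norm_coeComplex (t : ℂ) : ‖(t : ℍ[ℝ])‖ = ‖t‖ := by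
  have h := norm_fstComplex_sq_add (t : ℍ[ℝ])
  have h1 : fstComplex (t : ℍ[ℝ]) = t := rfl
  have h2 : sndComplex (t : ℍ[ℝ]) = 0 := rfl
  rw [h1, h2, norm_zero, zero_pow two_ne_zero, add_zero] at h
  exact ((sq_eq_sq₀ (norm_nonneg _) (norm_nonneg _)).1 h).symm

theorem continuous_coeComplex : Continuous ((↑) : ℂ → ℍ[ℝ]) :=
  ofComplex.toLinearMap.continuous_of_finiteDimensional

theorem continuous_fstComplex : Continuous fstComplex := by
  have : fstComplex = fun q : ℍ[ℝ] => (q.re : ℂ) + q.imI * Complex.I := by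
    funext q; apply Complex.ext <;> simp [fstComplex]
  rw [this]
  have := Quaternion.continuous_re
  have := Quaternion.continuous_imI
  fun_prop

/-- On the unit circle, both complex components of `(t q) ^ k` are, up to the factor `t ^ k`,
polynomials in `t` of degree at most `2 k`. -/
theorem exists_polynomial_pow (q : ℍ[ℝ]) (k : ℕ) : ∃ A B : ℂ[X],
    A.natDegree ≤ 2 * k ∧ B.natDegree ≤ 2 * k ∧ A.coeff (2 * k) = fstComplex q ^ k ∧
    ∀ t : ℂ, ‖t‖ = 1 → A.eval t = t ^ k * fstComplex ((t * q : ℍ[ℝ]) ^ k) ∧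
      B.eval t = t ^ k * sndComplex ((t * q : ℍ[ℝ]) ^ k) := by
  induction k with
  | zero => exact ⟨1, 0, by simp, by simp, by simp, fun t _ => by
      constructor <;> simp [fstComplex, sndComplex, Complex.ext_iff]⟩
  | succ k ih =>
    obtain ⟨A, B, hA, hB, hc, hAB⟩ := ih
    have hX (z : ℂ) : (A * C z * X ^ 2).natDegree ≤ 2 * (k + 1) := by
      compute_degree
      omega
    have hY (z : ℂ) : (B * C z).natDegree ≤ 2 * k := by
      compute_degree
      omega
    refine ⟨A * C (fstComplex q) * X ^ 2 - B * C (star (sndComplex q)),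
      A * C (sndComplex q) * X ^ 2 + B * C (star (fstComplex q)),
      (natDegree_sub_le _ _).trans (max_le (hX _) ((hY _).trans (by omega))),
      (natDegree_add_le _ _).trans (max_le (hX _) ((hY _).trans (by omega))), ?_, ?_⟩
    · rw [coeff_sub, coeff_eq_zero_of_natDegree_lt ((hY _).trans_lt (by omega)), mul_add, mul_one,
        coeff_mul_X_pow, coeff_mul_C, hc, sub_zero, pow_succ]
    · intro t ht
      obtain ⟨h1, h2⟩ := hAB t ht
      have htt : t * star t = 1 := by
        have := Complex.mul_conj t
        rw [Complex.normSq_eq_norm_sq, ht] at this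
        simpa using this
      have hz : fstComplex (t * q : ℍ[ℝ]) = t * fstComplex q := by
        rw [fstComplex_mul]; simp [fstComplex, sndComplex, Complex.ext_iff]
      have hw : sndComplex (t * q : ℍ[ℝ]) = t * sndComplex q := by
        rw [sndComplex_mul]; simp [fstComplex, sndComplex, Complex.ext_iff]
      rw [pow_succ (t * q : ℍ[ℝ]), fstComplex_mul _ (t * q : ℍ[ℝ]), sndComplex_mul _ (t * q : ℍ[ℝ]), hz, hw]
      simp only [eval_sub, eval_add, eval_mul, eval_C, eval_pow, eval_X, h1, h2, star_mul']
      constructor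
      · linear_combination (t ^ k * sndComplex ((t * q : ℍ[ℝ]) ^ k) * star (sndComplex q)) * htt
      · linear_combination -(t ^ k * sndComplex ((t * q : ℍ[ℝ]) ^ k) * star (fstComplex q)) * htt

theorem exists_polynomial_sum (q : ℍ[ℝ]) (n : ℕ) (b : ℕ → ℍ[ℝ]) (hb : b n = 1) :
    ∃ p : ℂ[X], p.natDegree ≤ 2 * n ∧ p.coeff (2 * n) = fstComplex q ^ n ∧
    ∀ t : ℂ, ‖t‖ = 1 → p.eval t =
      t ^ n * fstComplex (∑ k ∈ Finset.range (n + 1), (t * q : ℍ[ℝ]) ^ k * b k) := by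
  choose A B hA hB hc hAB using exists_polynomial_pow q
  have hdeg (k : ℕ) : (A k * C (fstComplex (b k)) -
      B k * C (star (sndComplex (b k)))).natDegree ≤ 2 * k := by
    have := hA k
    have := hB k
    compute_degree
    omega
  have hdeg' (k : ℕ) (hk : k ≤ n) : ((A k * C (fstComplex (b k)) -
      B k * C (star (sndComplex (b k)))) * X ^ (n - k)).natDegree ≤ n + k := by
    refine natDegree_mul_le.trans ?_
    have := hdeg k
    rw [natDegree_X_pow]
    omega
  refine ⟨∑ k ∈ Finset.range (n + 1), (A k * C (fstComplex (b k)) -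
      B k * C (star (sndComplex (b k)))) * X ^ (n - k), ?_, ?_, ?_⟩
  · refine natDegree_sum_le_of_forall_le _ _ fun k hk => ?_
    have hk := Finset.mem_range_succ_iff.1 hk
    exact (hdeg' k hk).trans (by omega)
  · rw [finsetSum_coeff, Finset.sum_range_succ, Finset.sum_eq_zero, zero_add]
    · simp [hb, fstComplex, sndComplex, hc, show (⟨1, 0⟩ : ℂ) = 1 from rfl,
        show (⟨0, 0⟩ : ℂ) = 0 from rfl]
    · intro k hk
      have hk := Finset.mem_range.1 hk
      exact coeff_eq_zero_of_natDegree_lt ((hdeg' k hk.le).trans_lt (by omega))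
  · intro t ht
    rw [eval_finsetSum, fstComplex_sum, Finset.mul_sum]
    refine Finset.sum_congr rfl fun k hk => ?_
    have hk := Finset.mem_range_succ_iff.1 hk
    obtain ⟨h1, h2⟩ := hAB k t ht
    rw [fstComplex_mul]
    simp only [eval_sub, eval_mul, eval_C, eval_pow, eval_X, h1, h2]
    rw [show t ^ n = t ^ k * t ^ (n - k) by rw [← pow_add]; congr; omega]
    ring

end Quaternion

instance : muH.IsHaarMeasure := Measure.isHaarMeasure_haarMeasure _

/-- Averaging over left translates along a curve does not change integrals against Haar measure. -/
theorem lintegral_lintegral_mul_left_muH {f : Metric.sphere (0 : ℍ[ℝ]) 1 → ENNReal}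
    (hf : Measurable f) {g : ℝ → Metric.sphere (0 : ℍ[ℝ]) 1} (hg : Continuous g) :
    ∫⁻ q, (∫⁻ θ in Set.Ioc 0 (2 * Real.pi), f (g θ * q)) ∂muH =
      ENNReal.ofReal (2 * Real.pi) * ∫⁻ q, f q ∂muH := by
  rw [lintegral_lintegral_swap]
  · simp_rw [lintegral_mul_left_eq_self f]
    simp [mul_comm]
  · refine (hf.comp ?_).aemeasurable
    exact ((hg.comp continuous_snd).mul continuous_fst).measurable

theorem lintegral_negLog_fstComplex_lt_top :
    ∫⁻ q : Metric.sphere (0 : ℍ[ℝ]) 1, negLog ‖fstComplex q‖ ∂muH < ⊤ := by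
  have hmeas : Measurable fun q : Metric.sphere (0 : ℍ[ℝ]) 1 => negLog ‖fstComplex q‖ :=
    measurable_negLog.comp (continuous_fstComplex.comp continuous_subtype_val).norm.measurable
  let e (θ : ℝ) : ℍ[ℝ] := ⟨Real.cos θ, 0, Real.sin θ, 0⟩
  have he (θ : ℝ) : ‖e θ‖ = 1 := by
    rw [← sq_eq_sq₀ (norm_nonneg _) zero_le_one, sq ‖e θ‖, ← Quaternion.normSq_eq_norm_mul_self,
      Quaternion.normSq_def']
    simp [e]
  have hcont : Continuous e := by
    let j : ℍ[ℝ] := ⟨0, 0, 1, 0⟩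
    have : e = fun θ => Real.cos θ • 1 + Real.sin θ • j := by
      funext θ; ext <;> simp [e] <;> simp [j]
    rw [this]
    fun_prop
  let g (θ : ℝ) : Metric.sphere (0 : ℍ[ℝ]) 1 := ⟨e θ, by simp [he]⟩
  have hg : Continuous g := hcont.subtype_mk _
  have hbound (q : Metric.sphere (0 : ℍ[ℝ]) 1) :
      ∫⁻ θ in Set.Ioc 0 (2 * Real.pi), negLog ‖fstComplex (g θ * q : Metric.sphere _ _)‖ ≤
        ENNReal.ofReal (2 * Real.pi) * (ENNReal.ofReal (Real.log 2) + negLog (1 / 2)) := by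
    set z := fstComplex q with hz
    set w := sndComplex q with hw
    have hq : ‖z‖ ^ 2 + ‖w‖ ^ 2 = 1 := by
      rw [hz, hw, norm_fstComplex_sq_add, norm_eq_of_mem_sphere q, one_pow]
    set a := (z + Complex.I * star w) / 2 with ha
    set b := (z - Complex.I * star w) / 2 with hb
    have hab : ‖a‖ ^ 2 + ‖b‖ ^ 2 = 1 / 2 := by
      have h := parallelogram_law_with_norm ℝ z (Complex.I * star w)
      have hIw : ‖Complex.I * star w‖ = ‖w‖ := by simp
      rw [hIw] at h
      rw [ha, hb, norm_div, norm_div, div_pow, div_pow]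
      simp only [Complex.norm_ofNat]
      linarith
    have hval (θ : ℝ) : fstComplex (g θ * q : Metric.sphere _ _) =
        circleMap 0 1 θ * a + star (circleMap 0 1 θ) * b := by
      have : ((g θ * q : Metric.sphere (0 : ℍ[ℝ]) 1) : ℍ[ℝ]) = e θ * q := rfl
      rw [this, fstComplex_mul, ← hz, ← hw, ha, hb]
      have h1 : circleMap 0 1 θ = Real.cos θ + Real.sin θ * Complex.I := by
        simp [circleMap, Complex.exp_mul_I]
      have h2 : fstComplex (e θ) = Real.cos θ := by
        apply Complex.ext <;> simp [fstComplex, e, Complex.cos_ofReal_re]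
      have h3 : sndComplex (e θ) = Real.sin θ := by
        apply Complex.ext <;> simp [sndComplex, e, Complex.sin_ofReal_re]
      have h4 : star (circleMap 0 1 θ) = Real.cos θ - Real.sin θ * Complex.I := by
        rw [h1]; apply Complex.ext <;> simp
      rw [h4, h1, h2, h3]
      linear_combination (-(Real.sin θ : ℂ) * star w) * Complex.I_sq
    have hkey (c d : ℂ) (hc : 1 / 2 ≤ ‖c‖) (hcd : ‖c‖ ^ 2 + ‖d‖ ^ 2 = 1 / 2)
        (h : ∀ θ, ‖fstComplex (g θ * q : Metric.sphere _ _)‖ =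
          ‖(C c * X ^ 2 + C d).eval (circleMap 0 1 θ)‖) :
        ∫⁻ θ in Set.Ioc 0 (2 * Real.pi), negLog ‖fstComplex (g θ * q : Metric.sphere _ _)‖ ≤
        ENNReal.ofReal (2 * Real.pi) * (ENNReal.ofReal (Real.log 2) + negLog (1 / 2)) := by
      simp_rw [h]
      refine (lintegral_negLog_norm_eval_le (C c * X ^ 2 + C d) 2 (by compute_degree) one_le_two
        fun t ht => ?_).trans ?_
      · simp only [eval_add, eval_mul, eval_C, eval_pow, eval_X]
        refine (norm_add_le _ _).trans ?_
        rw [norm_mul, norm_pow, ht, one_pow, mul_one]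
        nlinarith [sq_nonneg (‖c‖ - 1), sq_nonneg (‖d‖ - 1)]
      · gcongr
        refine negLog_anti (by norm_num) ?_
        simpa [coeff_C] using hc
    have hunit (θ : ℝ) : circleMap 0 1 θ * star (circleMap 0 1 θ) = 1 := by
      have := Complex.mul_conj (circleMap 0 1 θ)
      simpa [Complex.normSq_eq_norm_sq] using this
    by_cases h : 1 / 2 ≤ ‖a‖
    · refine hkey a b h hab fun θ => ?_
      rw [hval]
      have : (C a * X ^ 2 + C b).eval (circleMap 0 1 θ) =
          circleMap 0 1 θ * (circleMap 0 1 θ * a + star (circleMap 0 1 θ) * b) := by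
        simp only [eval_add, eval_mul, eval_C, eval_pow, eval_X]
        linear_combination -b * hunit θ
      rw [this, norm_mul, norm_circleMap_zero, abs_one, one_mul]
    · refine hkey (star b) (star a) ?_ (by simpa [add_comm] using hab) fun θ => ?_
      · rw [_root_.norm_star]
        nlinarith [norm_nonneg a, norm_nonneg b]
      rw [hval, ← _root_.norm_star]
      have : (C (star b) * X ^ 2 + C (star a)).eval (circleMap 0 1 θ) = circleMap 0 1 θ *
          star (circleMap 0 1 θ * a + star (circleMap 0 1 θ) * b) := by
        simp only [eval_add, eval_mul, eval_C, eval_pow, eval_X, star_add, star_mul', star_star]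
        linear_combination -star a * hunit θ
      rw [this, norm_mul, norm_circleMap_zero, abs_one, one_mul]
  have h := lintegral_mono (μ := muH) hbound
  rw [lintegral_lintegral_mul_left_muH hmeas hg, lintegral_const_mul' _ _ ENNReal.ofReal_ne_top,
    ENNReal.mul_le_mul_iff_right (by simp [Real.pi_pos]) ENNReal.ofReal_ne_top,
    lintegral_const] at h
  have := negLog_lt_top (x := 1 / 2) (by norm_num)
  exact h.trans_lt (by finiteness)

/-- The values of a polynomial on unit quaternions are bounded by the sum of the norms of its
coefficients. -/
theorem norm_sum_pow_mul_le (n : ℕ) (b : ℕ → ℍ[ℝ]) {q : ℍ[ℝ]} (hq : ‖q‖ = 1) :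
    ‖∑ k ∈ Finset.range (n + 1), q ^ k * b k‖ ≤ ∑ k ∈ Finset.range (n + 1), ‖b k‖ := by
  refine (norm_sum_le _ _).trans (Finset.sum_le_sum fun k _ => ?_)
  rw [norm_mul, norm_pow, hq, one_pow, one_mul]

theorem lintegral_negLog_monic_lt_top (n : ℕ) (b : ℕ → ℍ[ℝ]) (hb : b n = 1) :
    ∫⁻ q : Metric.sphere (0 : ℍ[ℝ]) 1,
      negLog ‖∑ k ∈ Finset.range (n + 1), (q : ℍ[ℝ]) ^ k * b k‖ ∂muH < ⊤ := by
  set S := ∑ k ∈ Finset.range (n + 1), ‖b k‖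
  have hS : 1 ≤ S := by
    have := Finset.single_le_sum (f := fun k => ‖b k‖) (fun k _ => norm_nonneg _)
      (Finset.self_mem_range_succ n)
    simpa [hb] using this
  have hmeas : Measurable fun q : Metric.sphere (0 : ℍ[ℝ]) 1 =>
      negLog ‖∑ k ∈ Finset.range (n + 1), (q : ℍ[ℝ]) ^ k * b k‖ :=
    measurable_negLog.comp (by fun_prop : Continuous _).measurable
  let g (θ : ℝ) : Metric.sphere (0 : ℍ[ℝ]) 1 := ⟨(circleMap 0 1 θ : ℂ), by simp [norm_coeComplex]⟩
  have hg : Continuous g :=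
    (continuous_coeComplex.comp (continuous_circleMap 0 1)).subtype_mk _
  have hbound (q : Metric.sphere (0 : ℍ[ℝ]) 1) :
      ∫⁻ θ in Set.Ioc 0 (2 * Real.pi), negLog ‖∑ k ∈ Finset.range (n + 1),
        ((g θ * q : Metric.sphere (0 : ℍ[ℝ]) 1) : ℍ[ℝ]) ^ k * b k‖ ≤
        ENNReal.ofReal (2 * Real.pi) *
          (ENNReal.ofReal (Real.log S) + n * negLog ‖fstComplex q‖) := by
    obtain ⟨p, hdeg, hc, hp⟩ := exists_polynomial_sum q n b hb
    have hle (t : ℂ) (ht : ‖t‖ = 1) : ‖p.eval t‖ ≤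
        ‖∑ k ∈ Finset.range (n + 1), ((t : ℍ[ℝ]) * q) ^ k * b k‖ := by
      rw [hp t ht, norm_mul, norm_pow, ht, one_pow, one_mul]
      exact norm_fstComplex_le _
    calc _ ≤ ∫⁻ θ in Set.Ioc 0 (2 * Real.pi), negLog ‖p.eval (circleMap 0 1 θ)‖ :=
          lintegral_mono fun θ => negLog_anti (norm_nonneg _) (hle _ (by simp))
      _ ≤ _ := lintegral_negLog_norm_eval_le p (2 * n) hdeg hS fun t ht =>
          (hle t ht).trans (norm_sum_pow_mul_le n b (by simp [norm_coeComplex, ht]))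
      _ ≤ _ := by
          rw [hc, norm_pow]
          gcongr
          exact negLog_pow_le _ _
  have h := lintegral_mono (μ := muH) hbound
  rw [lintegral_lintegral_mul_left_muH hmeas hg, lintegral_const_mul' _ _ ENNReal.ofReal_ne_top,
    ENNReal.mul_le_mul_iff_right (by simp [Real.pi_pos]) ENNReal.ofReal_ne_top,
    lintegral_add_left measurable_const, lintegral_const_mul' _ _ (ENNReal.natCast_ne_top n)] at h
  refine h.trans_lt (ENNReal.add_lt_top.2 ⟨?_, ?_⟩)
  · rw [lintegral_const]; finiteness
  · exact ENNReal.mul_lt_top (ENNReal.natCast_lt_top n) lintegral_negLog_fstComplex_lt_top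

theorem integrable_log_norm_sum_of_ne_zero (n : ℕ) (b : ℕ → ℍ[ℝ]) (hb : b n ≠ 0) :
    Integrable (fun q : Metric.sphere (0 : ℍ[ℝ]) 1 =>
      Real.log ‖∑ k ∈ Finset.range (n + 1), (q : ℍ[ℝ]) ^ k * b k‖) muH := by
  have hmeas : Measurable fun q : Metric.sphere (0 : ℍ[ℝ]) 1 =>
      Real.log ‖∑ k ∈ Finset.range (n + 1), (q : ℍ[ℝ]) ^ k * b k‖ :=
    Real.measurable_log.comp (by fun_prop : Continuous _).measurable
  refine ⟨hmeas.aestronglyMeasurable, ?_⟩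
  set S := 1 + ∑ k ∈ Finset.range (n + 1), ‖b k‖
  have hS : 1 ≤ S := le_add_of_nonneg_right (Finset.sum_nonneg fun _ _ => norm_nonneg _)
  have hmonic := lintegral_negLog_monic_lt_top n (fun k => b k * (b n)⁻¹) (mul_inv_cancel₀ hb)
  have hbound (q : Metric.sphere (0 : ℍ[ℝ]) 1) :
      ‖Real.log ‖∑ k ∈ Finset.range (n + 1), (q : ℍ[ℝ]) ^ k * b k‖‖ₑ ≤
        (ENNReal.ofReal (Real.log S) + negLog ‖b n‖) +
          negLog ‖∑ k ∈ Finset.range (n + 1), (q : ℍ[ℝ]) ^ k * (b k * (b n)⁻¹)‖ := by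
    refine (enorm_log_le (norm_nonneg _) ((norm_sum_pow_mul_le n b
      (norm_eq_of_mem_sphere q)).trans (by linarith)) hS).trans ?_
    rw [add_assoc]
    gcongr
    rw [add_comm (negLog _)]
    refine le_trans (le_of_eq ?_) (negLog_mul_le _ _)
    rw [← norm_mul]
    simp_rw [← mul_assoc, ← Finset.sum_mul]
    rw [inv_mul_cancel_right₀ hb]
  refine (lintegral_mono hbound).trans_lt ?_
  rw [lintegral_add_left measurable_const, lintegral_const]
  have := negLog_lt_top (norm_ne_zero_iff.2 hb)
  finiteness

/-- existence of the Mahler measure of a slice regular polynomial: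
`log |P(q)|` is integrable on the unit quaternions. -/
theorem integrable_log_slice_regular (n : ℕ) (a : Fin (n + 1) → Quaternion ℝ) (ha : a ≠ 0) :
    Integrable (fun q : Metric.sphere (0 : Quaternion ℝ) 1 =>
      Real.log ‖∑ k : Fin (n + 1), (q : Quaternion ℝ) ^ (k : ℕ) * a k‖) muH := by
  induction n with
  | zero => simp
  | succ n ih =>
    by_cases h : a (Fin.last (n + 1)) = 0
    · have h' : (fun k : Fin (n + 1) => a k.castSucc) ≠ 0 := fun h0 => ha (funext fun k => by
        induction k using Fin.lastCases with
        | last => exact h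
        | cast k => exact congrFun h0 k)
      simpa [Fin.sum_univ_castSucc (n := n + 1), h] using ih _ h'
    · have hlast := integrable_log_norm_sum_of_ne_zero (n + 1)
        (fun k => if hk : k < n + 1 + 1 then a ⟨k, hk⟩ else 0) (by simpa [Fin.last] using h)
      simpa only [Finset.sum_range, Fin.is_lt, dite_true, Fin.eta] using hlast
end

section
/- Let n ≥ 1 and let f_n : ℍ → ℍ be the n-fold ∗-power of q − i, explicitly f_n(q) = Σ_{k=0}^n binom(n,k)·qᵏ·(−i)^{n−k} (where i is the standard imaginary unit of ℍ). Then m_ℍ(f_n) = (2n/π)·∫₀^∞ t·coth(nt)·tanh²(t)·sech(t) dt − (n+2)/4. -/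
open MeasureTheory Quaternion

/-- The standard imaginary unit `i` of the quaternions. -/
noncomputable def qI : Quaternion ℝ := ⟨0, 1, 0, 0⟩
/-- The standard imaginary unit `j` of the quaternions. -/
noncomputable def qJ : Quaternion ℝ := ⟨0, 0, 1, 0⟩
/-- The standard imaginary unit `k` of the quaternions. -/
noncomputable def qK : Quaternion ℝ := ⟨0, 0, 0, 1⟩

@[simp] theorem re_qI : qI.re = 0 := rfl

@[simp] theorem imI_qI : qI.imI = 1 := rfl

@[simp] theorem imJ_qI : qI.imJ = 0 := rfl

@[simp] theorem imK_qI : qI.imK = 0 := rfl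

/-- The squared norm of the `n`-th `∗`-power of `q - i` at the unit quaternion `q = w + s * u`. -/
theorem normSq_star_pow_sub_qI (n : ℕ) (w s : ℝ) (hws : w ^ 2 + s ^ 2 = 1) (u : ℍ)
    (hu : u.re = 0) (hnorm : u.imI ^ 2 + u.imJ ^ 2 + u.imK ^ 2 = 1) :
    normSq (∑ k ∈ Finset.range (n + 1),
        (n.choose k : ℍ) * ((w : ℍ) + (s : ℍ) * u) ^ k * (-qI) ^ (n - k)) =
      (1 + u.imI) / 2 * (2 - 2 * s) ^ n + (1 - u.imI) / 2 * (2 + 2 * s) ^ n := by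
  have huu : u * u = -1 := by
    ext <;> simp [hu] <;> linarith
  set φ : ℂ →ₐ[ℝ] ℍ := Complex.lift ⟨u, huu⟩ with hφ
  set z : ℂ := ⟨w, s⟩ with hz
  have hφz : ∀ ζ : ℂ, φ ζ = (ζ.re : ℍ) + (ζ.im : ℍ) * u := by
    intro ζ
    simp only [hφ, Complex.lift_apply, Complex.liftAux_apply, Algebra.smul_def]
    rfl
  have hrep : ∀ ζ : ℂ, φ ζ = (2⁻¹ : ℝ) • ((1 - u * qI) * (ζ : ℍ) +
      (1 + u * qI) * ((starRingEnd ℂ ζ : ℂ) : ℍ)) := by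
    intro ζ
    rw [hφz]
    ext <;> simp [hu] <;> ring
  have hq : ∀ m : ℕ, (-qI) ^ m = (((-Complex.I) ^ m : ℂ) : ℍ) := by
    intro m
    have h1 : -qI = ofComplex (-Complex.I) := by ext <;> simp
    rw [h1, ← map_pow]; rfl
  have hsum : ∑ k ∈ Finset.range (n + 1),
        (n.choose k : ℍ) * ((w : ℍ) + (s : ℍ) * u) ^ k * (-qI) ^ (n - k) =
      (2⁻¹ : ℝ) • ((1 - u * qI) * (((z - Complex.I) ^ n : ℂ) : ℍ) +
        (1 + u * qI) * (((starRingEnd ℂ z - Complex.I) ^ n : ℂ) : ℍ)) := by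
    have hc : ∀ y : ℂ, (((y - Complex.I) ^ n : ℂ) : ℍ) = ∑ k ∈ Finset.range (n + 1),
        (n.choose k : ℍ) * ((y ^ k : ℂ) : ℍ) * (((-Complex.I) ^ (n - k) : ℂ) : ℍ) := by
      intro y
      change ofComplex _ = ∑ k ∈ Finset.range (n + 1), _ * ofComplex _ * ofComplex _
      rw [sub_eq_add_neg, add_pow, map_sum]
      refine Finset.sum_congr rfl fun k _ => ?_
      rw [map_mul, map_mul, map_natCast, ← Nat.cast_comm, mul_assoc]
    rw [hc, hc, Finset.mul_sum, Finset.mul_sum, ← Finset.sum_add_distrib, Finset.smul_sum]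
    refine Finset.sum_congr rfl fun k _ => ?_
    have h1 : ((w : ℍ) + (s : ℍ) * u) ^ k = φ (z ^ k) := by rw [map_pow, hφz]
    have h2 : (starRingEnd ℂ z) ^ k = starRingEnd ℂ (z ^ k) := by rw [map_pow]
    rw [h1, h2, hrep, hq]
    have h3 : ∀ x y : ℍ, x * ((n.choose k : ℍ) * y) = (n.choose k : ℍ) * (x * y) := by
      intro x y
      rw [← mul_assoc, ← Nat.cast_comm, mul_assoc]
    simp only [mul_assoc, h3]
    rw [← mul_add, ← mul_assoc (1 - _), ← mul_assoc (1 + _), ← add_mul, smul_mul_assoc,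
      mul_smul_comm]
  have hX : Complex.normSq ((z - Complex.I) ^ n) = (2 - 2 * s) ^ n := by
    rw [map_pow, Complex.normSq_apply]
    congr 1
    simp [hz]; linarith
  have hY : Complex.normSq ((starRingEnd ℂ z - Complex.I) ^ n) = (2 + 2 * s) ^ n := by
    rw [map_pow, Complex.normSq_apply]
    congr 1
    simp [hz]; linarith
  rw [hsum, ← hX, ← hY, normSq_def', Complex.normSq_apply, Complex.normSq_apply]
  generalize (z - Complex.I) ^ n = X
  generalize (starRingEnd ℂ z - Complex.I) ^ n = Y
  simp [hu]
  linear_combination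
    (X.re ^ 2 + X.im ^ 2 + Y.re ^ 2 + Y.im ^ 2 - 2 * X.re * Y.re - 2 * X.im * Y.im) / 4 * hnorm

/-- The substitution `r = c * s / √(1 - s ^ 2)` in a radial integral. -/
theorem lintegral_Ioi_eq_lintegral_Ioo_div_sqrt {c : ℝ} (hc : 0 < c) (g : ℝ → ENNReal) :
    ∫⁻ r in Set.Ioi (0 : ℝ), ENNReal.ofReal r * g r =
      ∫⁻ s in Set.Ioo (0 : ℝ) 1, ENNReal.ofReal s *
        (ENNReal.ofReal (c ^ 2 / (1 - s ^ 2) ^ 2) * g (c / √(1 - s ^ 2) * s)) := by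
  have hpos : ∀ s ∈ Set.Ioo (0 : ℝ) 1, 0 < 1 - s ^ 2 := fun s hs => by
    nlinarith [hs.1, hs.2]
  have himg : (fun s : ℝ => c / √(1 - s ^ 2) * s) '' Set.Ioo (0 : ℝ) 1 = Set.Ioi 0 := by
    ext r
    constructor
    · rintro ⟨s, hs, rfl⟩
      have := Real.sqrt_pos.2 (hpos s hs)
      exact mul_pos (div_pos hc this) hs.1
    · intro hr
      have hr : 0 < r := hr
      have h0 : 0 < √(r ^ 2 + c ^ 2) := by positivity
      have h1 : r < √(r ^ 2 + c ^ 2) := Real.lt_sqrt_of_sq_lt (by nlinarith)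
      refine ⟨r / √(r ^ 2 + c ^ 2), ⟨by positivity, (div_lt_one h0).2 h1⟩, ?_⟩
      have h2 : 1 - (r / √(r ^ 2 + c ^ 2)) ^ 2 = (c / √(r ^ 2 + c ^ 2)) ^ 2 := by
        have := Real.sq_sqrt (show 0 ≤ r ^ 2 + c ^ 2 by positivity)
        field_simp
        linarith
      simp only
      rw [h2, Real.sqrt_sq (by positivity)]
      field_simp
  have hderiv : ∀ s ∈ Set.Ioo (0 : ℝ) 1, HasDerivWithinAt (fun s : ℝ => c / √(1 - s ^ 2) * s)
      (c / ((1 - s ^ 2) * √(1 - s ^ 2))) (Set.Ioo 0 1) s := by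
    intro s hs
    have h := hpos s hs
    have hsq := Real.sqrt_pos.2 h
    have h2 := Real.sq_sqrt h.le
    have h1 : HasDerivAt (fun s : ℝ => 1 - s ^ 2) (-(2 * s)) s := by
      simpa using ((hasDerivAt_id s).pow 2).const_sub 1
    have h3 := (((hasDerivAt_const s c).div (h1.sqrt h.ne') hsq.ne').mul (hasDerivAt_id s))
    refine (h3.congr_deriv ?_).hasDerivWithinAt
    simp only [id, Pi.div_apply]
    field_simp
    simp only [h2]
    ring
  have hinj : Set.InjOn (fun s : ℝ => c / √(1 - s ^ 2) * s) (Set.Ioo (0 : ℝ) 1) := by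
    refine StrictMonoOn.injOn fun x hx y hy hxy => ?_
    have h1 : √(1 - y ^ 2) < √(1 - x ^ 2) :=
      Real.sqrt_lt_sqrt (hpos y hy).le (by nlinarith [hx.1, hy.1])
    have h2 := Real.sqrt_pos.2 (hpos y hy)
    have h3 : c / √(1 - x ^ 2) < c / √(1 - y ^ 2) := div_lt_div_of_pos_left hc h2 h1
    exact mul_lt_mul h3 hxy.le hx.1 (div_pos hc h2).le
  rw [← himg, lintegral_image_eq_lintegral_abs_deriv_mul measurableSet_Ioo hderiv hinj]
  refine setLIntegral_congr_fun measurableSet_Ioo fun s hs => ?_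
  have h := hpos s hs
  have hsq := Real.sqrt_pos.2 h
  have h2 := Real.sq_sqrt h.le
  rw [← mul_assoc, ← mul_assoc, ← ENNReal.ofReal_mul (abs_nonneg _), ← ENNReal.ofReal_mul hs.1.le]
  congr 2
  rw [abs_of_pos (by positivity)]
  field_simp
  rw [h2]

/-- The open unit disk in `ℝ × ℝ`. -/
def unitDisk : Set (ℝ × ℝ) := {p | p.1 ^ 2 + p.2 ^ 2 < 1}

theorem measurableSet_unitDisk : MeasurableSet unitDisk :=
  measurableSet_lt (by fun_prop) (by fun_prop)

theorem lintegral_eq_polar {f : ℝ × ℝ → ENNReal} (hf : Measurable f) :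
    ∫⁻ p, f p = ∫⁻ α in Set.Ioo (-Real.pi) Real.pi, ∫⁻ r in Set.Ioi (0 : ℝ),
      ENNReal.ofReal r * f (r * Real.cos α, r * Real.sin α) := by
  rw [← lintegral_comp_polarCoord_symm, polarCoord_target, Measure.volume_eq_prod,
    ← Measure.prod_restrict, lintegral_prod_symm]
  · rfl
  · simp only [polarCoord_symm_apply, smul_eq_mul]
    fun_prop

theorem lintegral_eq_lintegral_unitDisk {c : ℝ} (hc : 0 < c) {f : ℝ × ℝ → ENNReal}
    (hf : Measurable f) :
    ∫⁻ p, f p = ∫⁻ p in unitDisk, ENNReal.ofReal (c ^ 2 / (1 - (p.1 ^ 2 + p.2 ^ 2)) ^ 2) *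
      f ((c / √(1 - (p.1 ^ 2 + p.2 ^ 2))) • p) := by
  rw [← lintegral_indicator measurableSet_unitDisk, lintegral_eq_polar hf, lintegral_eq_polar]
  · refine lintegral_congr fun α => ?_
    rw [lintegral_Ioi_eq_lintegral_Ioo_div_sqrt hc, ← lintegral_indicator measurableSet_Ioo,
      ← lintegral_indicator measurableSet_Ioi]
    refine lintegral_congr fun r => ?_
    have h1 : (r * Real.cos α) ^ 2 + (r * Real.sin α) ^ 2 = r ^ 2 := by
      linear_combination r ^ 2 * Real.sin_sq_add_cos_sq α
    by_cases hr : 0 < r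
    · by_cases hr1 : r < 1
      · have h2 : (r * Real.cos α, r * Real.sin α) ∈ unitDisk := by
          change _ + _ < (1 : ℝ)
          rw [h1]; nlinarith
        rw [Set.indicator_of_mem (show r ∈ Set.Ioo (0 : ℝ) 1 from ⟨hr, hr1⟩),
          Set.indicator_of_mem (show r ∈ Set.Ioi (0 : ℝ) from hr), Set.indicator_of_mem h2]
        simp only [h1, Prod.smul_mk, smul_eq_mul, mul_assoc]
      · have h2 : (r * Real.cos α, r * Real.sin α) ∉ unitDisk := by
          intro h
          have : _ + _ < (1 : ℝ) := h
          rw [h1] at this; nlinarith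
        rw [Set.indicator_of_notMem (fun h => hr1 h.2),
          Set.indicator_of_mem (show r ∈ Set.Ioi (0 : ℝ) from hr), Set.indicator_of_notMem h2,
          mul_zero]
    · rw [Set.indicator_of_notMem (fun h => hr h.1),
        Set.indicator_of_notMem (show r ∉ Set.Ioi (0 : ℝ) from hr)]
  · exact Measurable.indicator (by fun_prop) measurableSet_unitDisk

/-- Integration over the unit disk in the coordinates `(cos θ, a * sin θ)`. -/
theorem lintegral_unitDisk_eq {f : ℝ × ℝ → ENNReal} (hf : Measurable f) :
    ∫⁻ p in unitDisk, f p = ∫⁻ θ in Set.Ioo 0 Real.pi, ∫⁻ a in Set.Ioo (-1 : ℝ) 1,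
      ENNReal.ofReal (Real.sin θ ^ 2) * f (Real.cos θ, Real.sin θ * a) := by
  have himg : Real.cos '' Set.Ioo 0 Real.pi = Set.Ioo (-1) 1 := by
    ext x
    constructor
    · rintro ⟨θ, hθ, rfl⟩
      have h := Real.sin_pos_of_pos_of_lt_pi hθ.1 hθ.2
      constructor <;> nlinarith [Real.sin_sq_add_cos_sq θ]
    · intro hx
      exact ⟨Real.arccos x, ⟨Real.arccos_pos.2 hx.2, Real.arccos_lt_pi.2 hx.1⟩,
        Real.cos_arccos hx.1.le hx.2.le⟩
  have hind : ∀ w, ∫⁻ x, unitDisk.indicator f (w, x) = (Set.Ioo (-1 : ℝ) 1).indicator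
      (fun w => ∫⁻ x in {x | w ^ 2 + x ^ 2 < 1}, f (w, x)) w := by
    intro w
    by_cases hw : w ∈ Set.Ioo (-1 : ℝ) 1
    · rw [Set.indicator_of_mem hw,
        ← lintegral_indicator (measurableSet_lt (by fun_prop) (by fun_prop))]
      rfl
    · rw [Set.indicator_of_notMem hw]
      rw [lintegral_eq_zero_iff (by have := hf.indicator measurableSet_unitDisk; fun_prop)]
      refine Filter.Eventually.of_forall fun x => Set.indicator_of_notMem (fun h => hw ?_) _
      have h : w ^ 2 + x ^ 2 < 1 := h
      constructor <;> nlinarith [sq_nonneg x]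
  rw [← lintegral_indicator measurableSet_unitDisk, Measure.volume_eq_prod,
    lintegral_prod _ (hf.indicator measurableSet_unitDisk).aemeasurable]
  simp_rw [hind]
  have hcos := lintegral_image_eq_lintegral_abs_deriv_mul (s := Set.Ioo 0 Real.pi)
    measurableSet_Ioo (fun θ _ => (Real.hasDerivAt_cos θ).hasDerivWithinAt)
    (Real.injOn_cos.mono Set.Ioo_subset_Icc_self)
  rw [himg] at hcos
  rw [lintegral_indicator measurableSet_Ioo, hcos]
  refine setLIntegral_congr_fun measurableSet_Ioo fun θ hθ => ?_
  have hs := Real.sin_pos_of_pos_of_lt_pi hθ.1 hθ.2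
  have himg2 : (fun a => Real.sin θ * a) '' Set.Ioo (-1 : ℝ) 1 =
      {x | Real.cos θ ^ 2 + x ^ 2 < 1} := by
    ext x
    constructor
    · rintro ⟨a, ha, rfl⟩
      have h1 : a ^ 2 < 1 := by nlinarith [ha.1, ha.2]
      change _ + _ < (1 : ℝ)
      nlinarith [Real.sin_sq_add_cos_sq θ, mul_pos hs hs]
    · intro hx
      have hx : Real.cos θ ^ 2 + x ^ 2 < 1 := hx
      have h1 : x ^ 2 < Real.sin θ ^ 2 := by nlinarith [Real.sin_sq_add_cos_sq θ]
      have h2 := abs_lt.1 (abs_lt_of_sq_lt_sq h1 hs.le)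
      refine ⟨x / Real.sin θ, ⟨?_, ?_⟩, ?_⟩
      · rw [lt_div_iff₀ hs]; linarith
      · rw [div_lt_iff₀ hs]; linarith
      · field_simp
  rw [← himg2, lintegral_image_eq_lintegral_abs_deriv_mul measurableSet_Ioo
      (f' := fun _ => Real.sin θ)
      (fun a _ => by simpa using ((hasDerivAt_id a).const_mul (Real.sin θ)).hasDerivWithinAt)
      (fun a _ b _ h => mul_left_cancel₀ hs.ne' h), ← lintegral_const_mul _ (by fun_prop)]
  refine lintegral_congr fun a => ?_
  rw [← mul_assoc, ← ENNReal.ofReal_mul (abs_nonneg _), abs_neg, abs_mul_abs_self, sq]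

/-- The identification of `(ℝ × ℝ) × (ℝ × ℝ)` with the quaternions. -/
noncomputable def prodEquivQuaternion : ((ℝ × ℝ) × (ℝ × ℝ)) ≃L[ℝ] ℍ :=
  LinearEquiv.toContinuousLinearEquiv
    { toFun := fun x => ⟨x.1.1, x.1.2, x.2.1, x.2.2⟩
      invFun := fun q => ((q.re, q.imI), (q.imJ, q.imK))
      map_add' := fun _ _ => rfl
      map_smul' := fun r x => by ext <;> rfl
      left_inv := fun _ => rfl
      right_inv := fun _ => rfl }

/-- The squared Euclidean norm on `ℝ × ℝ`. -/
def sqNorm (p : ℝ × ℝ) : ℝ := p.1 ^ 2 + p.2 ^ 2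

@[fun_prop]
theorem measurable_sqNorm : Measurable sqNorm := by unfold sqNorm; fun_prop

theorem sqNorm_smul (c : ℝ) (p : ℝ × ℝ) : sqNorm (c • p) = c ^ 2 * sqNorm p := by
  simp [sqNorm]; ring

theorem sqNorm_nonneg (p : ℝ × ℝ) : 0 ≤ sqNorm p := by unfold sqNorm; positivity

theorem sqNorm_pos {p : ℝ × ℝ} (hp : p ≠ 0) : 0 < sqNorm p := by
  refine lt_of_le_of_ne (sqNorm_nonneg p) fun h => hp ?_
  unfold sqNorm at h
  ext <;> simp <;> nlinarith [sq_nonneg p.1, sq_nonneg p.2]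

theorem normSq_prodEquivQuaternion (x : (ℝ × ℝ) × (ℝ × ℝ)) :
    normSq (prodEquivQuaternion x) = sqNorm x.1 + sqNorm x.2 := by
  rw [normSq_def']
  change x.1.1 ^ 2 + x.1.2 ^ 2 + x.2.1 ^ 2 + x.2.2 ^ 2 = _
  unfold sqNorm
  ring

/-- The part of the punctured unit ball of `(ℝ × ℝ) × (ℝ × ℝ)` lying over `B` after radial
projection to the unit sphere and projection to the first factor. -/
def coneOver (B : Set (ℝ × ℝ)) : Set ((ℝ × ℝ) × (ℝ × ℝ)) :=
  {x | 0 < sqNorm x.1 + sqNorm x.2 ∧ sqNorm x.1 + sqNorm x.2 < 1 ∧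
    (√(sqNorm x.1 + sqNorm x.2))⁻¹ • x.1 ∈ B}

theorem measurableSet_coneOver {B : Set (ℝ × ℝ)} (hB : MeasurableSet B) :
    MeasurableSet (coneOver B) := by
  have h0 : MeasurableSet {x : (ℝ × ℝ) × (ℝ × ℝ) | 0 < sqNorm x.1 + sqNorm x.2} :=
    measurableSet_lt (by fun_prop) (by fun_prop)
  have h1 : MeasurableSet {x : (ℝ × ℝ) × (ℝ × ℝ) | sqNorm x.1 + sqNorm x.2 < 1} :=
    measurableSet_lt (by fun_prop) (by fun_prop)
  have hdir : Measurable fun x : (ℝ × ℝ) × (ℝ × ℝ) => (√(sqNorm x.1 + sqNorm x.2))⁻¹ • x.1 := by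
    fun_prop
  exact h0.inter (h1.inter (hdir hB))

/-- The function `v ↦ |v|²` on the punctured unit disk, extended by zero. -/
noncomputable def sqNormOnDisk (v : ℝ × ℝ) : ENNReal :=
  {v | 0 < sqNorm v ∧ sqNorm v < 1}.indicator (fun v => ENNReal.ofReal (sqNorm v)) v

@[fun_prop]
theorem measurable_sqNormOnDisk : Measurable sqNormOnDisk := by
  have h0 : MeasurableSet {v | 0 < sqNorm v} := measurableSet_lt (by fun_prop) (by fun_prop)
  have h1 : MeasurableSet {v | sqNorm v < 1} := measurableSet_lt (by fun_prop) (by fun_prop)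
  exact Measurable.indicator (by fun_prop) (h0.inter h1)

theorem lintegral_sqNormOnDisk_smul {k : ℝ} (hk : 0 < k) :
    ENNReal.ofReal ((k ^ 2)⁻¹) * ∫⁻ v, sqNormOnDisk (k⁻¹ • v) = ∫⁻ v, sqNormOnDisk v := by
  have h := Measure.map_addHaar_smul (volume : Measure (ℝ × ℝ)) (inv_ne_zero hk.ne')
  have h2 : ∫⁻ v, sqNormOnDisk (k⁻¹ • v) = ENNReal.ofReal (k ^ 2) * ∫⁻ v, sqNormOnDisk v := by
    rw [← lintegral_map (f := sqNormOnDisk) (g := fun v : ℝ × ℝ => k⁻¹ • v) (by fun_prop)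
      (by fun_prop), h, lintegral_smul_measure, smul_eq_mul]
    congr 2
    rw [Module.finrank_prod, Module.finrank_self, inv_pow, inv_inv, abs_of_pos (by positivity)]
  rw [h2, ← mul_assoc, ← ENNReal.ofReal_mul (by positivity), inv_mul_cancel₀ (by positivity)]
  simp

theorem volume_coneOver {B : Set (ℝ × ℝ)} (hB : MeasurableSet B) :
    volume (coneOver B) = (∫⁻ v, sqNormOnDisk v) * volume (B ∩ unitDisk) := by
  have hslice : ∀ v : ℝ × ℝ, v ≠ 0 → volume ((fun p => (p, v)) ⁻¹' coneOver B) =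
      ∫⁻ p in unitDisk, B.indicator 1 p *
        (ENNReal.ofReal ((√(1 - sqNorm p) ^ 2)⁻¹) * sqNormOnDisk ((√(1 - sqNorm p))⁻¹ • v)) := by
    intro v hv
    have hv := sqNorm_pos hv
    have hm : MeasurableSet ((fun p => (p, v)) ⁻¹' coneOver B) :=
      (measurable_id.prodMk measurable_const) (measurableSet_coneOver hB)
    rw [← lintegral_indicator_one hm, lintegral_eq_lintegral_unitDisk (Real.sqrt_pos.2 hv)
      (measurable_one.indicator hm)]
    refine setLIntegral_congr_fun measurableSet_unitDisk fun p hp => ?_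
    have hp : 0 < 1 - sqNorm p := sub_pos.2 hp
    change ENNReal.ofReal (√(sqNorm v) ^ 2 / (1 - sqNorm p) ^ 2) *
      Set.indicator _ _ ((√(sqNorm v) / √(1 - sqNorm p)) • p) = _
    have hN : sqNorm ((√(sqNorm v) / √(1 - sqNorm p)) • p) + sqNorm v =
        sqNorm v / (1 - sqNorm p) := by
      rw [sqNorm_smul, div_pow, Real.sq_sqrt hv.le, Real.sq_sqrt hp.le]
      field_simp
      ring
    have hdir : (√(sqNorm v / (1 - sqNorm p)))⁻¹ • (√(sqNorm v) / √(1 - sqNorm p)) • p = p := by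
      rw [smul_smul, Real.sqrt_div hv.le, inv_mul_cancel₀, one_smul]
      have := Real.sqrt_pos.2 hv
      have := Real.sqrt_pos.2 hp
      positivity
    have hw : sqNorm ((√(1 - sqNorm p))⁻¹ • v) = sqNorm v / (1 - sqNorm p) := by
      rw [sqNorm_smul, inv_pow, Real.sq_sqrt hp.le]
      field_simp
    have hpos : 0 < sqNorm v / (1 - sqNorm p) := div_pos hv hp
    have hiff : ((√(sqNorm v) / √(1 - sqNorm p)) • p ∈ (fun p => (p, v)) ⁻¹' coneOver B) ↔
        sqNorm v / (1 - sqNorm p) < 1 ∧ p ∈ B := by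
      simp only [coneOver, Set.mem_preimage, Set.mem_ofPred_eq, hN, hdir, hpos, true_and]
    have hiff' : (√(1 - sqNorm p))⁻¹ • v ∈ {v | 0 < sqNorm v ∧ sqNorm v < 1} ↔
        sqNorm v / (1 - sqNorm p) < 1 := by
      simp only [Set.mem_ofPred_eq, hw, hpos, true_and]
    by_cases h1 : sqNorm v / (1 - sqNorm p) < 1
    · by_cases h2 : p ∈ B
      · rw [Set.indicator_of_mem (hiff.2 ⟨h1, h2⟩), Set.indicator_of_mem h2, sqNormOnDisk,
          Set.indicator_of_mem (hiff'.2 h1), hw,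
          ← ENNReal.ofReal_mul (by positivity), Real.sq_sqrt hp.le, Real.sq_sqrt hv.le]
        simp only [Pi.one_apply, mul_one, one_mul]
        congr 1
        field_simp
      · rw [Set.indicator_of_notMem (fun h => h2 (hiff.1 h).2), Set.indicator_of_notMem h2]
        simp
    · rw [Set.indicator_of_notMem (fun h => h1 (hiff.1 h).1), sqNormOnDisk,
        Set.indicator_of_notMem (fun h => h1 (hiff'.1 h))]
      simp
  have hae : ∀ᵐ v : ℝ × ℝ, v ≠ 0 := by
    rw [ae_iff]
    simp
  rw [Measure.volume_eq_prod, Measure.prod_apply_symm (measurableSet_coneOver hB),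
    lintegral_congr_ae (hae.mono hslice), lintegral_lintegral_swap]
  · have hin : ∀ p ∈ unitDisk, ∫⁻ v, B.indicator 1 p *
        (ENNReal.ofReal ((√(1 - sqNorm p) ^ 2)⁻¹) * sqNormOnDisk ((√(1 - sqNorm p))⁻¹ • v)) =
        B.indicator 1 p * ∫⁻ v, sqNormOnDisk v := by
      intro p hp
      have hp : 0 < 1 - sqNorm p := sub_pos.2 hp
      rw [lintegral_const_mul _ (by fun_prop), lintegral_const_mul _ (by fun_prop),
        lintegral_sqNormOnDisk_smul (Real.sqrt_pos.2 hp)]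
    rw [setLIntegral_congr_fun measurableSet_unitDisk hin, lintegral_mul_const _
      (measurable_one.indicator hB), lintegral_indicator_one hB, Measure.restrict_apply hB,
      mul_comm]
  · have : Measurable (B.indicator (1 : ℝ × ℝ → ENNReal)) := measurable_one.indicator hB
    fun_prop

open scoped Pointwise in
instance : (volume : Measure ℍ).toSphere.IsMulLeftInvariant where
  map_mul_left_eq_self g := by
    have hg : ‖(g : ℍ)‖ = 1 := by simp
    have hg0 : (g : ℍ) ≠ 0 := by rw [← norm_ne_zero_iff, hg]; exact one_ne_zero
    let L : ℍ ≃ₗᵢ[ℝ] ℍ :=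
      { toFun := fun x => g * x
        invFun := fun x => (g : ℍ)⁻¹ * x
        map_add' := fun x y => mul_add _ x y
        map_smul' := fun r x => mul_smul_comm r (g : ℍ) x
        left_inv := fun x => inv_mul_cancel_left₀ hg0 x
        right_inv := fun x => mul_inv_cancel_left₀ hg0 x
        norm_map' := fun x => by
          change ‖(g : ℍ) * x‖ = ‖x‖
          rw [norm_mul, hg, one_mul] }
    ext s hs
    have hm : Measurable (fun x : Metric.sphere (0 : ℍ) 1 => g * x) :=
      (continuous_const.mul continuous_id).measurable
    rw [Measure.map_apply hm hs, Measure.toSphere_apply' _ (hm hs), Measure.toSphere_apply' _ hs,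
      ← L.measurePreserving.measure_preimage_equiv (f := L.toMeasurableEquiv)
        (Set.Ioo (0 : ℝ) 1 • (Subtype.val '' s))]
    congr 2
    ext x
    simp only [Set.mem_smul, Set.mem_image, Set.mem_preimage]
    constructor
    · rintro ⟨r, hr, _, ⟨q, hq, rfl⟩, rfl⟩
      exact ⟨r, hr, _, ⟨g * q, hq, rfl⟩, (mul_smul_comm r (g : ℍ) q).symm⟩
    · rintro ⟨r, hr, _, ⟨q, hq, rfl⟩, h⟩
      refine ⟨r, hr, _, ⟨g⁻¹ * q, by simpa using hq, rfl⟩, ?_⟩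
      have h : r • (q : ℍ) = g * x := h
      change r • ((g : ℍ)⁻¹ * q) = x
      rw [← mul_smul_comm, h, inv_mul_cancel_left₀ hg0]

open scoped Pointwise in
theorem preimage_Ioo_smul_eq_coneOver (B : Set (ℝ × ℝ)) :
    prodEquivQuaternion ⁻¹' (Set.Ioo (0 : ℝ) 1 • (Subtype.val ''
      ((fun q : Metric.sphere (0 : ℍ) 1 => (q.1.re, q.1.imI)) ⁻¹' B))) = coneOver B := by
  ext x
  have hx := normSq_prodEquivQuaternion x
  simp only [Set.mem_smul, Set.mem_image, Set.mem_preimage]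
  constructor
  · rintro ⟨r, hr, _, ⟨q, hq, rfl⟩, h⟩
    have hq1 : ‖(q : ℍ)‖ = 1 := by simp
    have h1 : sqNorm x.1 + sqNorm x.2 = r ^ 2 := by
      rw [← hx, ← h, normSq_smul, normSq_eq_norm_mul_self, hq1]
      ring
    have h2 : x.1 = r • (q.1.re, q.1.imI) :=
      Prod.ext (congrArg (fun y : ℍ => y.re) h).symm (congrArg (fun y : ℍ => y.imI) h).symm
    simp only [coneOver, Set.mem_ofPred_eq, h1, Real.sqrt_sq hr.1.le]
    refine ⟨pow_pos hr.1 2, by nlinarith [hr.1, hr.2], ?_⟩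
    rw [h2, smul_smul, inv_mul_cancel₀ hr.1.ne', one_smul]
    exact hq
  · rintro ⟨h0, h1, hB⟩
    have hs := Real.sqrt_pos.2 h0
    have hnorm : ‖prodEquivQuaternion x‖ = √(sqNorm x.1 + sqNorm x.2) := by
      rw [← hx, normSq_eq_norm_mul_self, Real.sqrt_mul_self (norm_nonneg _)]
    refine ⟨√(sqNorm x.1 + sqNorm x.2), ⟨hs, by rw [Real.sqrt_lt' one_pos]; simpa using h1⟩, _,
      ⟨⟨(√(sqNorm x.1 + sqNorm x.2))⁻¹ • prodEquivQuaternion x, ?_⟩, hB, rfl⟩, ?_⟩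
    · rw [mem_sphere_zero_iff_norm, norm_smul, hnorm, norm_inv, Real.norm_of_nonneg hs.le,
        inv_mul_cancel₀ hs.ne']
    · change √(sqNorm x.1 + sqNorm x.2) • (√(sqNorm x.1 + sqNorm x.2))⁻¹ • _ = _
      rw [smul_smul, mul_inv_cancel₀ hs.ne', one_smul]

instance inst_s5 : IsProbabilityMeasure muH := ⟨Measure.haarMeasure_self (K₀ := ⊤)⟩

@[fun_prop]
theorem measurable_re_imI :
    Measurable (fun q : Metric.sphere (0 : ℍ) 1 => (q.1.re, q.1.imI)) := by
  have h := (continuous_fst.comp (prodEquivQuaternion.symm.continuous)).comp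
    (continuous_subtype_val (p := fun q : ℍ => q ∈ Metric.sphere (0 : ℍ) 1))
  exact h.measurable

open scoped Pointwise in
theorem exists_map_muH_eq_smul :
    ∃ c : ENNReal, muH.map (fun q : Metric.sphere (0 : ℍ) 1 => (q.1.re, q.1.imI)) =
      c • (volume : Measure (ℝ × ℝ)).restrict unitDisk := by
  have hT := Measure.haarMeasure_unique (volume : Measure ℍ).toSphere ⊤
  set T := (volume : Measure ℍ).toSphere
    ((⊤ : TopologicalSpace.PositiveCompacts (Metric.sphere (0 : ℍ) 1)) : Set _)
  have hT0 : T ≠ 0 := fun h => Measure.toSphere_ne_zero (volume : Measure ℍ) (by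
    rw [hT, h, zero_smul])
  have hTtop : T ≠ ⊤ := measure_ne_top _ _
  have hmu : muH = T⁻¹ • (volume : Measure ℍ).toSphere := by
    rw [hT, smul_smul, ENNReal.inv_mul_cancel hT0 hTtop, one_smul]
    rfl
  have : (volume : Measure ((ℝ × ℝ) × (ℝ × ℝ))).IsAddHaarMeasure :=
    Measure.prod.instIsAddHaarMeasure _ _
  obtain ⟨k, hvol⟩ : ∃ k : NNReal, (volume : Measure ℍ) =
      k • (volume : Measure ((ℝ × ℝ) × (ℝ × ℝ))).map prodEquivQuaternion :=
    ⟨_, Measure.isAddLeftInvariant_eq_smul _ _⟩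
  refine ⟨T⁻¹ * (4 * (k * ∫⁻ v, sqNormOnDisk v)), Measure.ext fun B hB => ?_⟩
  have hcone : (volume : Measure ℍ) (Set.Ioo (0 : ℝ) 1 • (Subtype.val ''
      ((fun q : Metric.sphere (0 : ℍ) 1 => (q.1.re, q.1.imI)) ⁻¹' B))) =
      k * ((∫⁻ v, sqNormOnDisk v) * volume (B ∩ unitDisk)) := by
    rw [← volume_coneOver hB, ← preimage_Ioo_smul_eq_coneOver, hvol, Measure.smul_apply]
    exact congrArg (fun y => (k : ENNReal) * y)
      (prodEquivQuaternion.toHomeomorph.toMeasurableEquiv.map_apply _)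
  rw [Measure.map_apply measurable_re_imI hB, hmu, Measure.smul_apply,
    Measure.toSphere_apply' _ (measurable_re_imI hB), Quaternion.finrank_eq_four, hcone,
    Measure.smul_apply, Measure.restrict_apply hB]
  simp only [smul_eq_mul, mul_assoc, Nat.cast_ofNat]

/-- The pair `(re, imI)` of a random unit quaternion is uniformly distributed on the unit disk. -/
theorem lintegral_re_imI_muH {f : ℝ × ℝ → ENNReal} (hf : Measurable f) :
    ∫⁻ q, f (q.1.re, q.1.imI) ∂muH = ENNReal.ofReal (Real.pi⁻¹) *
      ∫⁻ θ in Set.Ioo 0 Real.pi, ∫⁻ a in Set.Ioo (-1 : ℝ) 1,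
        ENNReal.ofReal (Real.sin θ ^ 2) * f (Real.cos θ, Real.sin θ * a) := by
  obtain ⟨c, hc⟩ := exists_map_muH_eq_smul
  have key : ∀ {g : ℝ × ℝ → ENNReal}, Measurable g → ∫⁻ q, g (q.1.re, q.1.imI) ∂muH =
      c * ∫⁻ θ in Set.Ioo 0 Real.pi, ∫⁻ a in Set.Ioo (-1 : ℝ) 1,
        ENNReal.ofReal (Real.sin θ ^ 2) * g (Real.cos θ, Real.sin θ * a) := fun {g} hg => by
    rw [← lintegral_unitDisk_eq hg, ← lintegral_map hg measurable_re_imI, hc,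
      lintegral_smul_measure, smul_eq_mul]
  have h1 := key (measurable_const (a := 1))
  have hsin : ∫⁻ θ in Set.Ioo 0 Real.pi, ENNReal.ofReal (Real.sin θ ^ 2) =
      ENNReal.ofReal (Real.pi / 2) := by
    rw [← ofReal_integral_eq_lintegral_ofReal, ← integral_Ioc_eq_integral_Ioo,
      ← intervalIntegral.integral_of_le Real.pi_pos.le, integral_sin_sq]
    · simp
    · exact (Continuous.integrableOn_Icc (by fun_prop)).mono_set Set.Ioo_subset_Icc_self
    · exact Filter.Eventually.of_forall fun θ => sq_nonneg _
  have hc1 : c * ENNReal.ofReal Real.pi = 1 := by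
    simp only [mul_one, lintegral_const, measure_univ, Measure.restrict_apply_univ,
      Real.volume_Ioo] at h1
    rw [lintegral_mul_const _ (by fun_prop), hsin, ← ENNReal.ofReal_mul (by positivity)] at h1
    rw [h1]
    congr 2
    ring
  rw [key hf, ENNReal.ofReal_inv_of_pos Real.pi_pos, ENNReal.eq_inv_of_mul_eq_one_left hc1]

theorem integral_re_imI_muH {f : ℝ × ℝ → ℝ} (hf : Measurable f) :
    ∫ q, f (q.1.re, q.1.imI) ∂muH = Real.pi⁻¹ *
      ∫ x in Set.Ioo 0 Real.pi ×ˢ Set.Ioo (-1 : ℝ) 1,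
        Real.sin x.1 ^ 2 * f (Real.cos x.1, Real.sin x.1 * x.2) := by
  have hmap : muH.map (fun q : Metric.sphere (0 : ℍ) 1 => (q.1.re, q.1.imI)) =
      ENNReal.ofReal (Real.pi⁻¹) • (((volume : Measure (ℝ × ℝ)).restrict
        (Set.Ioo 0 Real.pi ×ˢ Set.Ioo (-1 : ℝ) 1)).withDensity
          fun x => ENNReal.ofReal (Real.sin x.1 ^ 2)).map
        fun x => (Real.cos x.1, Real.sin x.1 * x.2) := by
    refine Measure.ext_of_lintegral _ fun g hg => ?_
    rw [lintegral_map hg measurable_re_imI, lintegral_re_imI_muH hg, lintegral_smul_measure,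
      lintegral_map hg (by fun_prop), lintegral_withDensity_eq_lintegral_mul _ (by fun_prop)
        (by fun_prop), Measure.volume_eq_prod, ← Measure.prod_restrict,
      lintegral_prod _ (by fun_prop)]
    rfl
  have h1 := integral_map (μ := muH) measurable_re_imI.aemeasurable
    hf.stronglyMeasurable.aestronglyMeasurable
  have hR : (0 : ℝ) ≤ Real.pi⁻¹ := by positivity
  rw [← h1, hmap, integral_smul_measure, ENNReal.toReal_ofReal hR, smul_eq_mul,
    integral_map (by fun_prop) hf.stronglyMeasurable.aestronglyMeasurable,
    integral_withDensity_eq_integral_toReal_smul (by fun_prop) (by simp)]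
  simp only [ENNReal.toReal_ofReal (sq_nonneg _), smul_eq_mul]

theorem integral_log_cos_zero_pi_div_two :
    ∫ θ in (0)..(Real.pi / 2), Real.log (Real.cos θ) = -Real.log 2 * Real.pi / 2 := by
  rw [← integral_log_sin_zero_pi_div_two]
  simp [← Real.sin_pi_div_two_sub,
    intervalIntegral.integral_comp_sub_left (fun x ↦ Real.log (Real.sin x)) (Real.pi / 2)]

theorem integral_cos_two_mul_log_cos_sub_sin_sq :
    ∫ θ in (0)..(Real.pi / 2), ((Real.cos θ ^ 2 - Real.sin θ ^ 2) * Real.log (Real.cos θ)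
      - Real.sin θ ^ 2) = 0 := by
  have hint : IntervalIntegrable (fun θ => (Real.cos θ ^ 2 - Real.sin θ ^ 2) *
      Real.log (Real.cos θ) - Real.sin θ ^ 2) volume 0 (Real.pi / 2) :=
    (intervalIntegrable_log_cos.continuousOn_mul (by fun_prop)).sub
      (Continuous.intervalIntegrable (by fun_prop) _ _)
  have hcont : Continuous fun θ => Real.sin θ * (Real.cos θ * Real.log (Real.cos θ)) :=
    Real.continuous_sin.mul (Real.continuous_mul_log.comp Real.continuous_cos)
  rw [intervalIntegral.integral_eq_sub_of_hasDerivAt_of_le (by positivity) hcont.continuousOn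
    (fun θ hθ => ?_) hint]
  · simp
  · have hc : 0 < Real.cos θ := Real.cos_pos_of_mem_Ioo ⟨by linarith [hθ.1, Real.pi_pos], hθ.2⟩
    have h := (Real.hasDerivAt_sin θ).mul ((Real.hasDerivAt_cos θ).mul
      ((Real.hasDerivAt_cos θ).log hc.ne'))
    refine h.congr_deriv ?_
    simp only [Pi.mul_apply]
    field_simp
    ring

theorem intervalIntegrable_sin_sq_mul_log_two_mul_cos :
    IntervalIntegrable (fun θ => Real.sin θ ^ 2 * Real.log (2 * Real.cos θ)) volume
      0 (Real.pi / 2) := by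
  have h : IntervalIntegrable (fun θ => Real.sin θ ^ 2 * (Real.log 2 + Real.log (Real.cos θ)))
      volume 0 (Real.pi / 2) :=
    (intervalIntegrable_const.add intervalIntegrable_log_cos).continuousOn_mul (by fun_prop)
  rw [intervalIntegrable_iff_integrableOn_Ioo_of_le (by positivity)] at h ⊢
  refine h.congr_fun (fun θ hθ => ?_) measurableSet_Ioo
  have hc : 0 < Real.cos θ := Real.cos_pos_of_mem_Ioo ⟨by linarith [hθ.1, Real.pi_pos], hθ.2⟩
  simp only
  rw [Real.log_mul two_ne_zero hc.ne']

theorem integral_sin_sq_mul_log_two_mul_cos :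
    ∫ θ in (0)..(Real.pi / 2), Real.sin θ ^ 2 * Real.log (2 * Real.cos θ) = -Real.pi / 8 := by
  have hsplit : ∫ θ in (0)..(Real.pi / 2), Real.sin θ ^ 2 * Real.log (2 * Real.cos θ) =
      ∫ θ in (0)..(Real.pi / 2), ((Real.log 2 - 1 / 2) * Real.sin θ ^ 2 +
        (1 / 2) * Real.log (Real.cos θ) -
        (1 / 2) * ((Real.cos θ ^ 2 - Real.sin θ ^ 2) * Real.log (Real.cos θ)
          - Real.sin θ ^ 2)) := by
    rw [intervalIntegral.integral_of_le (by positivity),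
      intervalIntegral.integral_of_le (by positivity), integral_Ioc_eq_integral_Ioo,
      integral_Ioc_eq_integral_Ioo]
    refine setIntegral_congr_fun measurableSet_Ioo fun θ hθ => ?_
    have hc : 0 < Real.cos θ := Real.cos_pos_of_mem_Ioo ⟨by linarith [hθ.1, Real.pi_pos], hθ.2⟩
    rw [Real.log_mul two_ne_zero hc.ne', Real.cos_sq']
    ring
  have h1 : IntervalIntegrable (fun θ => (Real.log 2 - 1 / 2) * Real.sin θ ^ 2) volume
      0 (Real.pi / 2) := Continuous.intervalIntegrable (by fun_prop) _ _
  have h2 : IntervalIntegrable (fun θ => (1 / 2) * Real.log (Real.cos θ)) volume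
      0 (Real.pi / 2) := intervalIntegrable_log_cos.const_mul _
  have h3 : IntervalIntegrable (fun θ => (1 / 2) * ((Real.cos θ ^ 2 - Real.sin θ ^ 2) *
      Real.log (Real.cos θ) - Real.sin θ ^ 2)) volume 0 (Real.pi / 2) :=
    ((intervalIntegrable_log_cos.continuousOn_mul (by fun_prop)).sub
      (Continuous.intervalIntegrable (by fun_prop) _ _)).const_mul _
  rw [hsplit, intervalIntegral.integral_sub (h1.add h2) h3, intervalIntegral.integral_add h1 h2]
  simp only [intervalIntegral.integral_const_mul, integral_log_cos_zero_pi_div_two,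
    integral_cos_two_mul_log_cos_sub_sin_sq, integral_sin_sq]
  simp
  ring

/-- The mean of `log` over the segment between `x` and `y`. -/
theorem integral_half_log_segment {x y : ℝ} (hxy : x ≠ y) :
    ∫ a in (-1)..(1 : ℝ), (1 / 2) * Real.log ((1 + a) / 2 * x + (1 - a) / 2 * y) =
      (x * Real.log x - y * Real.log y) / (x - y) - 1 := by
  have hne : x - y ≠ 0 := sub_ne_zero.2 hxy
  have h : ∀ a : ℝ, (1 + a) / 2 * x + (1 - a) / 2 * y = (x - y) / 2 * a + (x + y) / 2 :=
    fun a => by ring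
  simp only [h, intervalIntegral.integral_const_mul]
  rw [intervalIntegral.integral_comp_mul_add (fun z => Real.log z) (by simpa using hne),
    show (x - y) / 2 * (-1) + (x + y) / 2 = y by ring,
    show (x - y) / 2 * 1 + (x + y) / 2 = x by ring, integral_log, smul_eq_mul]
  field_simp
  ring

/-- The function `|f(q)|²`, in terms of `s = |Im q|` and the `i`-coordinate `a` of `Im q / |Im q|`,
where `f = (q - i)^{∗n}`. -/
noncomputable def starPowNormSq (n : ℕ) (s a : ℝ) : ℝ :=
  (1 + a) / 2 * (2 - 2 * s) ^ n + (1 - a) / 2 * (2 + 2 * s) ^ n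

theorem integrableOn_log_one_sub : IntegrableOn (fun a : ℝ => Real.log (1 - a))
    (Set.Ioo (-1) 1) := by
  rw [← intervalIntegrable_iff_integrableOn_Ioo_of_le (by norm_num)]
  have h := (intervalIntegral.intervalIntegrable_log' (a := 2) (b := 0)).comp_sub_left 1
  norm_num at h
  exact h

theorem abs_log_starPowNormSq_le (n : ℕ) {s a : ℝ} (hs : 0 ≤ s) (hs1 : s ≤ 1)
    (ha : a ∈ Set.Ioo (-1 : ℝ) 1) :
    |Real.log (starPowNormSq n s a)| ≤ n * Real.log 4 + Real.log 2 + |Real.log (1 - a)| := by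
  have ha0 : 0 < 1 - a := sub_pos.2 ha.2
  have ha1 : 0 < 1 + a := by linarith [ha.1]
  have hx0 : 0 ≤ (2 - 2 * s) ^ n := pow_nonneg (by linarith) n
  have hx1 : (2 - 2 * s) ^ n ≤ 4 ^ n := pow_le_pow_left₀ (by linarith) (by linarith) n
  have hy0 : 1 ≤ (2 + 2 * s) ^ n := one_le_pow₀ (by linarith)
  have hy1 : (2 + 2 * s) ^ n ≤ 4 ^ n := pow_le_pow_left₀ (by linarith) (by linarith) n
  have hlow : (1 - a) / 2 ≤ starPowNormSq n s a := by
    unfold starPowNormSq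
    nlinarith [mul_nonneg ha1.le hx0, mul_le_mul_of_nonneg_left hy0 ha0.le]
  have hup : starPowNormSq n s a ≤ 4 ^ n := by
    unfold starPowNormSq
    nlinarith [mul_le_mul_of_nonneg_left hx1 ha1.le, mul_le_mul_of_nonneg_left hy1 ha0.le]
  have h1 := Real.log_le_log (by positivity) hlow
  have h2 := Real.log_le_log (lt_of_lt_of_le (by positivity) hlow) hup
  rw [Real.log_div ha0.ne' two_ne_zero] at h1
  rw [Real.log_pow] at h2
  have h3 : 0 ≤ n * Real.log 4 := mul_nonneg n.cast_nonneg (Real.log_nonneg (by norm_num))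
  have h4 : 0 ≤ Real.log 2 := Real.log_nonneg (by norm_num)
  rw [abs_le]
  constructor
  · linarith [neg_abs_le (Real.log (1 - a))]
  · linarith [abs_nonneg (Real.log (1 - a))]

theorem integrableOn_sin_sq_mul_log_starPowNormSq (n : ℕ) :
    IntegrableOn (fun x : ℝ × ℝ =>
      Real.sin x.1 ^ 2 * ((1 / 2) * Real.log (starPowNormSq n (Real.sin x.1) x.2)))
      (Set.Ioo 0 Real.pi ×ˢ Set.Ioo (-1 : ℝ) 1) := by
  have hbound : Integrable (fun x : ℝ × ℝ => n * Real.log 4 + Real.log 2 + |Real.log (1 - x.2)|)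
      ((volume.restrict (Set.Ioo 0 Real.pi)).prod (volume.restrict (Set.Ioo (-1 : ℝ) 1))) :=
    (integrable_const _).add
      (Integrable.comp_snd (f := fun a => |Real.log (1 - a)|) integrableOn_log_one_sub.abs _)
  rw [Measure.prod_restrict, ← Measure.volume_eq_prod] at hbound
  refine hbound.mono' ?_ ?_
  · refine Measurable.aestronglyMeasurable ?_
    unfold starPowNormSq
    fun_prop
  · filter_upwards [ae_restrict_mem (measurableSet_Ioo.prod measurableSet_Ioo)] with x hx
    have h := abs_log_starPowNormSq_le n (Real.sin_nonneg_of_nonneg_of_le_pi hx.1.1.le hx.1.2.le)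
      (Real.sin_le_one _) hx.2
    rw [norm_mul, norm_mul, Real.norm_eq_abs, Real.norm_eq_abs, Real.norm_eq_abs,
      abs_of_nonneg (sq_nonneg _), abs_of_pos (by norm_num : (0 : ℝ) < 1 / 2)]
    have h1 := Real.sin_sq_le_one x.1
    nlinarith [abs_nonneg (Real.log (starPowNormSq n (Real.sin x.1) x.2)),
      sq_nonneg (Real.sin x.1)]

theorem log_norm_star_pow_sub_qI (n : ℕ) {q : ℍ} (hq : ‖q‖ = 1) :
    Real.log ‖∑ k ∈ Finset.range (n + 1), (n.choose k : ℍ) * q ^ k * (-qI) ^ (n - k)‖ =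
      (1 / 2) * Real.log (starPowNormSq n √(1 - q.re ^ 2) (q.imI / √(1 - q.re ^ 2))) := by
  have hsum : q.re ^ 2 + q.imI ^ 2 + q.imJ ^ 2 + q.imK ^ 2 = 1 := by
    rw [← Quaternion.normSq_def', Quaternion.normSq_eq_norm_mul_self, hq, one_mul]
  have hle : 0 ≤ 1 - q.re ^ 2 := by nlinarith [sq_nonneg q.imI, sq_nonneg q.imJ, sq_nonneg q.imK]
  have hs2 : √(1 - q.re ^ 2) ^ 2 = 1 - q.re ^ 2 := Real.sq_sqrt hle
  set s := √(1 - q.re ^ 2)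
  suffices h : Quaternion.normSq (∑ k ∈ Finset.range (n + 1),
      (n.choose k : ℍ) * q ^ k * (-qI) ^ (n - k)) = starPowNormSq n s (q.imI / s) by
    rw [← h, Quaternion.normSq_eq_norm_mul_self, ← sq, Real.log_pow]
    push_cast
    ring
  have hws : q.re ^ 2 + s ^ 2 = 1 := by linarith
  rcases eq_or_ne s 0 with hs | hs
  · have hI : q.imI = 0 ∧ q.imJ = 0 ∧ q.imK = 0 := by
      rw [hs] at hs2
      refine ⟨?_, ?_, ?_⟩ <;>
        nlinarith [sq_nonneg q.imI, sq_nonneg q.imJ, sq_nonneg q.imK]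
    have hqe : q = (q.re : ℍ) + (s : ℍ) * qI := by
      ext <;> simp [hs, hI]
    have := normSq_star_pow_sub_qI n q.re s hws qI (by simp) (by simp)
    rw [← hqe] at this
    rw [this, starPowNormSq, hs]
    ring
  · obtain ⟨u, hre, hI, hJ, hK⟩ : ∃ u : ℍ, u.re = 0 ∧ u.imI = q.imI / s ∧
        u.imJ = q.imJ / s ∧ u.imK = q.imK / s :=
      ⟨⟨0, q.imI / s, q.imJ / s, q.imK / s⟩, rfl, rfl, rfl, rfl⟩
    have hqe : q = (q.re : ℍ) + (s : ℍ) * u := by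
      ext <;> simp [hre, hI, hJ, hK] <;> field_simp
    have := normSq_star_pow_sub_qI n q.re s hws u hre (by
      rw [hI, hJ, hK]
      field_simp
      linarith)
    rw [← hqe, hI] at this
    exact this

theorem mahlerH_star_pow_sub_qI_eq_integral (n : ℕ) :
    mahlerH (fun q => ∑ k ∈ Finset.range (n + 1),
        (n.choose k : ℍ) * q ^ k * (-qI) ^ (n - k)) =
      Real.pi⁻¹ * ∫ θ in (0)..Real.pi, Real.sin θ ^ 2 *
        ∫ a in (-1)..(1 : ℝ), (1 / 2) * Real.log (starPowNormSq n (Real.sin θ) a) := by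
  let g : ℝ × ℝ → ℝ := fun x =>
    (1 / 2) * Real.log (starPowNormSq n √(1 - x.1 ^ 2) (x.2 / √(1 - x.1 ^ 2)))
  have hg : Measurable g := by
    unfold g starPowNormSq
    fun_prop
  have hpt : ∀ q : Metric.sphere (0 : ℍ) 1,
      Real.log ‖∑ k ∈ Finset.range (n + 1), (n.choose k : ℍ) * (q : ℍ) ^ k *
        (-qI) ^ (n - k)‖ = g (q.1.re, q.1.imI) := fun q =>
    log_norm_star_pow_sub_qI n (by simp)
  rw [mahlerH, integral_congr_ae (ae_of_all _ hpt), integral_re_imI_muH hg]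
  have hset : MeasurableSet (Set.Ioo 0 Real.pi ×ˢ Set.Ioo (-1 : ℝ) 1) :=
    measurableSet_Ioo.prod measurableSet_Ioo
  have hcongr : ∀ x ∈ Set.Ioo 0 Real.pi ×ˢ Set.Ioo (-1 : ℝ) 1,
      Real.sin x.1 ^ 2 * g (Real.cos x.1, Real.sin x.1 * x.2) =
      Real.sin x.1 ^ 2 * ((1 / 2) * Real.log (starPowNormSq n (Real.sin x.1) x.2)) := by
    rintro ⟨θ, a⟩ ⟨hθ, -⟩
    have hpos : 0 < Real.sin θ := Real.sin_pos_of_mem_Ioo hθ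
    have hsqrt : √(1 - Real.cos θ ^ 2) = Real.sin θ := by
      rw [← Real.sin_sq, Real.sqrt_sq hpos.le]
    simp only [g, hsqrt, mul_div_cancel_left₀ a hpos.ne']
  rw [setIntegral_congr_fun hset hcongr, Measure.volume_eq_prod,
    setIntegral_prod _ (integrableOn_sin_sq_mul_log_starPowNormSq n)]
  simp only [integral_const_mul, intervalIntegral.integral_of_le Real.pi_pos.le,
    intervalIntegral.integral_of_le (show (-1 : ℝ) ≤ 1 by norm_num), integral_Ioc_eq_integral_Ioo]

theorem intervalIntegrable_sin_sq_mul_integral_log_starPowNormSq (n : ℕ) :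
    IntervalIntegrable (fun θ => Real.sin θ ^ 2 *
      ∫ a in (-1)..(1 : ℝ), (1 / 2) * Real.log (starPowNormSq n (Real.sin θ) a))
      volume 0 Real.pi := by
  rw [intervalIntegrable_iff_integrableOn_Ioo_of_le Real.pi_pos.le]
  have h := integrableOn_sin_sq_mul_log_starPowNormSq n
  rw [IntegrableOn, Measure.volume_eq_prod, ← Measure.prod_restrict] at h
  simpa only [IntegrableOn, integral_const_mul, intervalIntegral.integral_of_le
    (show (-1 : ℝ) ≤ 1 by norm_num), integral_Ioc_eq_integral_Ioo] using h.integral_prod_left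

theorem intervalIntegral_comp_sin_zero_pi {F : ℝ → ℝ}
    (hF : IntervalIntegrable (fun θ => F (Real.sin θ)) volume 0 Real.pi) :
    ∫ θ in (0)..Real.pi, F (Real.sin θ) = 2 * ∫ θ in (0)..(Real.pi / 2), F (Real.sin θ) := by
  have hpi := Real.pi_pos
  have h1 : IntervalIntegrable (fun θ => F (Real.sin θ)) volume 0 (Real.pi / 2) :=
    hF.mono_set (by
      rw [Set.uIcc_of_le hpi.le, Set.uIcc_of_le (by linarith)]
      exact Set.Icc_subset_Icc le_rfl (by linarith))
  have h2 : IntervalIntegrable (fun θ => F (Real.sin θ)) volume (Real.pi / 2) Real.pi :=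
    hF.mono_set (by
      rw [Set.uIcc_of_le hpi.le, Set.uIcc_of_le (by linarith)]
      exact Set.Icc_subset_Icc (by linarith) le_rfl)
  have h3 := intervalIntegral.integral_comp_sub_left (a := 0) (b := Real.pi / 2)
    (fun θ => F (Real.sin θ)) Real.pi
  simp only [Real.sin_pi_sub, sub_zero] at h3
  rw [show Real.pi - Real.pi / 2 = Real.pi / 2 by ring] at h3
  rw [← intervalIntegral.integral_add_adjacent_intervals h1 h2, ← h3]
  ring

/-- The excess over `n * log (2 * cos θ) - 1` of the mean of `log |f(q)|` over the unit quaternions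
`q` with real part `cos θ`, where `f` is the `n`-th `∗`-power of `q - i`. -/
noncomputable def logRatioTerm (n : ℕ) (θ : ℝ) : ℝ :=
  (∫ a in (-1)..(1 : ℝ), (1 / 2) * Real.log (starPowNormSq n (Real.sin θ) a)) -
    n * Real.log (2 * Real.cos θ) + 1

theorem logRatioTerm_arctan_sinh {n : ℕ} (hn : 1 ≤ n) {t : ℝ} (ht : 0 < t) :
    logRatioTerm n (Real.arctan (Real.sinh t)) =
      n * (t * (Real.cosh (n * t) / Real.sinh (n * t))) := by
  have hc := Real.cosh_pos t
  have hsq : √(1 + Real.sinh t ^ 2) = Real.cosh t := by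
    rw [add_comm, ← Real.cosh_sq, Real.sqrt_sq hc.le]
  have hn0 : n ≠ 0 := by omega
  have hx : 2 - 2 * Real.sin (Real.arctan (Real.sinh t)) = 2 / Real.cosh t * Real.exp (-t) := by
    rw [Real.sin_arctan, hsq, ← Real.cosh_sub_sinh]
    field_simp
  have hy : 2 + 2 * Real.sin (Real.arctan (Real.sinh t)) = 2 / Real.cosh t * Real.exp t := by
    rw [Real.sin_arctan, hsq, ← Real.cosh_add_sinh]
    field_simp
  have hcpos : 0 < 2 / Real.cosh t := by positivity
  have hnt : 0 < n * t := by positivity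
  have hsinh : 0 < Real.sinh (n * t) := Real.sinh_pos_iff.2 hnt
  have hxn : (2 / Real.cosh t * Real.exp (-t)) ^ n =
      (2 / Real.cosh t) ^ n * Real.exp (-(n * t)) := by
    rw [mul_pow, ← Real.exp_nat_mul]
    ring_nf
  have hyn : (2 / Real.cosh t * Real.exp t) ^ n =
      (2 / Real.cosh t) ^ n * Real.exp (n * t) := by
    rw [mul_pow, ← Real.exp_nat_mul]
  have hlt : (2 / Real.cosh t) ^ n * Real.exp (-(n * t)) <
      (2 / Real.cosh t) ^ n * Real.exp (n * t) := by
    gcongr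
    linarith
  simp only [logRatioTerm, starPowNormSq, hx, hy, hxn, hyn]
  rw [integral_half_log_segment hlt.ne, Real.cos_arctan, hsq,
    Real.log_mul (by positivity) (by positivity), Real.log_mul (by positivity) (by positivity),
    Real.log_exp, Real.log_exp, Real.log_pow, mul_one_div]
  have hP : (2 / Real.cosh t) ^ n ≠ 0 := by positivity
  have hE : Real.exp (-(n * t)) - Real.exp (n * t) ≠ 0 := by
    rw [Real.sinh_eq] at hsinh
    linarith
  rw [← mul_sub, Real.cosh_eq (n * t), Real.sinh_eq (n * t)]
  have hE' : Real.exp (n * t) - Real.exp (-(n * t)) ≠ 0 := fun h => hE (by linarith)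
  rw [← neg_sub (Real.exp (n * t))]
  generalize Real.log (2 / Real.cosh t) = L
  field_simp
  ring

theorem integral_Ioo_zero_pi_div_two_eq_integral_Ioi (F : ℝ → ℝ) :
    ∫ θ in Set.Ioo 0 (Real.pi / 2), F θ =
      ∫ t in Set.Ioi (0 : ℝ), (1 / Real.cosh t) * F (Real.arctan (Real.sinh t)) := by
  have himage : (fun t => Real.arctan (Real.sinh t)) '' Set.Ioi 0 = Set.Ioo 0 (Real.pi / 2) := by
    ext θ
    constructor
    · rintro ⟨t, ht, rfl⟩
      exact ⟨Real.arctan_pos.2 (Real.sinh_pos_iff.2 ht), Real.arctan_lt_pi_div_two _⟩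
    · intro hθ
      refine ⟨Real.arsinh (Real.tan θ), Real.arsinh_pos_iff.2
        (Real.tan_pos_of_pos_of_lt_pi_div_two hθ.1 hθ.2), ?_⟩
      simp only [Real.sinh_arsinh]
      exact Real.arctan_tan (by linarith [hθ.1, Real.pi_pos]) hθ.2
  have hderiv : ∀ t ∈ Set.Ioi (0 : ℝ), HasDerivWithinAt (fun t => Real.arctan (Real.sinh t))
      (1 / Real.cosh t) (Set.Ioi 0) t := by
    intro t _
    have h := (Real.hasDerivAt_sinh t).arctan
    refine (h.congr_deriv ?_).hasDerivWithinAt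
    have := Real.cosh_pos t
    rw [add_comm, ← Real.cosh_sq]
    field_simp
  rw [← himage, integral_image_eq_integral_abs_deriv_smul measurableSet_Ioi hderiv
    (Real.arctan_injective.comp Real.sinh_injective).injOn]
  refine setIntegral_congr_fun measurableSet_Ioi fun t _ => ?_
  have := Real.cosh_pos t
  simp only [smul_eq_mul]
  rw [abs_of_pos (by positivity)]

theorem integral_sin_sq_mul_logRatioTerm {n : ℕ} (hn : 1 ≤ n) :
    ∫ θ in (0)..(Real.pi / 2), Real.sin θ ^ 2 * logRatioTerm n θ =
      n * ∫ t in Set.Ioi (0 : ℝ), t * (Real.cosh (n * t) / Real.sinh (n * t)) *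
        Real.tanh t ^ 2 * (1 / Real.cosh t) := by
  rw [intervalIntegral.integral_of_le (by positivity), integral_Ioc_eq_integral_Ioo,
    integral_Ioo_zero_pi_div_two_eq_integral_Ioi, ← integral_const_mul]
  refine setIntegral_congr_fun measurableSet_Ioi fun t ht => ?_
  have hsq : √(1 + Real.sinh t ^ 2) = Real.cosh t := by
    rw [add_comm, ← Real.cosh_sq, Real.sqrt_sq (Real.cosh_pos t).le]
  simp only [logRatioTerm_arctan_sinh hn ht, Real.sin_arctan, hsq, Real.tanh_eq_sinh_div_cosh]
  ring

theorem integral_sin_sq_mul_integral_log_starPowNormSq {n : ℕ} (hn : 1 ≤ n) :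
    ∫ θ in (0)..(Real.pi / 2), Real.sin θ ^ 2 *
        ∫ a in (-1)..(1 : ℝ), (1 / 2) * Real.log (starPowNormSq n (Real.sin θ) a) =
      n * (∫ t in Set.Ioi (0 : ℝ), t * (Real.cosh (n * t) / Real.sinh (n * t)) *
        Real.tanh t ^ 2 * (1 / Real.cosh t)) - n * Real.pi / 8 - Real.pi / 4 := by
  have hpi := Real.pi_pos
  have hK : IntervalIntegrable (fun θ => Real.sin θ ^ 2 *
      ∫ a in (-1)..(1 : ℝ), (1 / 2) * Real.log (starPowNormSq n (Real.sin θ) a))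
      volume 0 (Real.pi / 2) :=
    (intervalIntegrable_sin_sq_mul_integral_log_starPowNormSq n).mono_set (by
      rw [Set.uIcc_of_le hpi.le, Set.uIcc_of_le (by linarith)]
      exact Set.Icc_subset_Icc le_rfl (by linarith))
  have hL := intervalIntegrable_sin_sq_mul_log_two_mul_cos.const_mul (n : ℝ)
  have hS : IntervalIntegrable (fun θ => Real.sin θ ^ 2) volume 0 (Real.pi / 2) :=
    Continuous.intervalIntegrable (by fun_prop) _ _
  have hJ : ∀ θ, Real.sin θ ^ 2 * logRatioTerm n θ =
      Real.sin θ ^ 2 * (∫ a in (-1)..(1 : ℝ),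
        (1 / 2) * Real.log (starPowNormSq n (Real.sin θ) a)) -
      n * (Real.sin θ ^ 2 * Real.log (2 * Real.cos θ)) + Real.sin θ ^ 2 := fun θ => by
    rw [logRatioTerm]
    ring
  have h := integral_sin_sq_mul_logRatioTerm hn
  simp only [hJ] at h
  rw [intervalIntegral.integral_add (hK.sub hL) hS, intervalIntegral.integral_sub hK hL,
    intervalIntegral.integral_const_mul, integral_sin_sq_mul_log_two_mul_cos, integral_sin_sq] at h
  simp only [Real.sin_zero, Real.cos_pi_div_two, zero_mul, mul_zero, sub_zero] at h
  linarith

/-- `m_ℍ((x - i)^{∗n})` as an explicit integral. -/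
theorem mahlerH_star_pow_sub_i (n : ℕ) (hn : 1 ≤ n) :
    mahlerH (fun q => ∑ k ∈ Finset.range (n + 1),
        (n.choose k : Quaternion ℝ) * q ^ k * (-qI) ^ (n - k)) =
      (2 * n / Real.pi) *
        (∫ t in Set.Ioi (0 : ℝ),
          t * (Real.cosh (n * t) / Real.sinh (n * t)) * Real.tanh t ^ 2 * (1 / Real.cosh t))
      - (n + 2) / 4 := by
  rw [mahlerH_star_pow_sub_qI_eq_integral,
    intervalIntegral_comp_sin_zero_pi (F := fun s => s ^ 2 *
      ∫ a in (-1)..(1 : ℝ), (1 / 2) * Real.log (starPowNormSq n s a))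
      (intervalIntegrable_sin_sq_mul_integral_log_starPowNormSq n),
    integral_sin_sq_mul_integral_log_starPowNormSq hn]
  have := Real.pi_ne_zero
  field_simp
  ring
end
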